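/- Let k ≥ 1, ℓ be integers with gcd(ℓ,k) = 1. Then there exist constants C > 0 and c > 0 such that for all x ≥ 2, |#{2 ≤ n ≤ x : P(n) ≡ ℓ (mod k)} − x/φ(k)| ≤ C·x·exp(−c·(log x)^{1/3}), where P(n) is the largest prime divisor of n and φ is the Euler totient function. -/

import Mathlib

/-!
Orthogonality of Dirichlet characters reduces the theorem to the sums `∑_{n ≤ x} χ(P(n))` over the
characters `χ` modulo `k`.

For the principal character the sum counts all `n ≤ x` except those with `P(n) ∣ k`; such `n` have
only prime factors at most `k`, and Rankin's trick (`smoothNumbersUpTo_card_le_rankin`) shows that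
they are negligible (`exists_trivial_bound`).

For `χ ≠ 1`, put `Y ≈ exp ((log x) ^ (2 / 3))`. The `n` with `P(n) ≤ Y` number at most
`x exp (-log x / log Y)` times a power of `log Y`, again by Rankin's trick. The other `n` are written
as `n = m p` with `p = P(n)`; for fixed `m` the prime `p` runs over an interval
`max (Y, P(m) - 1) < p ≤ x / m`, on which the prime number theorem for `χ` gives
`∑ χ(p) ≪ (x / m) exp (-c √(log Y))` (`exists_prime_sum_bound`). Summation over `m` costs a factor
`1 + log x`, and both savings are `exp (-c (log x) ^ (1 / 3))` (`exists_nontrivial_bound`).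

The prime number theorem with the classical error term, `ψ(x, χ) ≪ x exp (-c √(log x))` for fixed
`χ ≠ 1` (`exists_psi_bound`), is proved from scratch by de la Vallée Poussin's method. Partial
summation continues `(s - 1) L(s, χ)` to `Re s > 0` with polynomial growth; Borel–Carathéodory and a
one-by-one division of zeros give Landau's local lower bound for the real part of `L'/L`; with the
`3-4-1` inequality this yields a region `Re s > 1 - κ / log (|t| + 3)` free of zeros in which
`L'/L ≪ log² (|t| + 3)` (`exists_LFunction_logDeriv_bound`). As the modulus is fixed, a possible real
zero needs no separate treatment: nonvanishing of `L(s, χ)` on `Re s = 1` and compactness cover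
bounded heights. A Perron formula with the kernel `1 / (s (s + 1))` then bounds a Cesàro mean of
`χ(n) Λ(n)`, and a short difference removes the averaging.
-/

open Finset

/-- `maxPrimeFac n` is the largest prime divisor of `n` (junk value `0` for `n ≤ 1`). -/
def maxPrimeFac (n : ℕ) : ℕ := n.primeFactors.sup id

/-! ### Local analysis of the logarithmic derivative -/

/-- Borel–Carathéodory for the logarithmic derivative: if `h` is zero-free on a disc of radius `r`
and at most `exp M` times its central value there, its logarithmic derivative is `O(M / r)` on the
disc of half the radius. -/
lemma norm_logDeriv_le_of_zero_free {h : ℂ → ℂ} {r M : ℝ} (hr : 0 < r) (hM : 0 < M)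
    (hd : DifferentiableOn ℂ h (Metric.ball 0 r)) (h0 : ∀ z ∈ Metric.ball (0 : ℂ) r, h z ≠ 0)
    (hb : ∀ z ∈ Metric.ball (0 : ℂ) r, ‖h z‖ ≤ Real.exp M * ‖h 0‖) {z : ℂ} (hz : ‖z‖ ≤ r / 2) :
    ‖logDeriv h z‖ ≤ 24 * M / r := by
  have hdl : DifferentiableOn ℂ (logDeriv h) (Metric.ball 0 r) :=
    (hd.deriv Metric.isOpen_ball).div hd h0
  obtain ⟨g, hg⟩ := hdl.isExactOn_ball
  have h00 : (0 : ℂ) ∈ Metric.ball (0 : ℂ) r := Metric.mem_ball_self hr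
  have hgd : DifferentiableOn ℂ g (Metric.ball 0 r) :=
    fun w hw => (hg w hw).differentiableAt.differentiableWithinAt
  set G : ℂ → ℂ := fun w => g w - g 0 with hG
  -- `exp (-G) * h` is constant, so `G` is a logarithm of `h / h 0`.
  have hconst : ∀ w ∈ Metric.ball (0 : ℂ) r, h w = h 0 * Complex.exp (G w) := by
    intro w hw
    have key : ∀ u ∈ Metric.ball (0 : ℂ) r,
        HasDerivAt (fun v => h v * Complex.exp (-G v)) 0 u := by
      intro u hu
      have h1 : HasDerivAt h (deriv h u) u :=
        (hd.differentiableAt (Metric.isOpen_ball.mem_nhds hu)).hasDerivAt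
      have h2 : HasDerivAt G (logDeriv h u) u := (hg u hu).sub_const _
      have h3 := h1.mul h2.neg.cexp
      refine h3.congr_deriv ?_
      rw [logDeriv_apply]
      have := h0 u hu
      field_simp
      simp
    have := Metric.isOpen_ball.is_const_of_deriv_eq_zero (convex_ball (0 : ℂ) r).isPreconnected
      (fun u hu => (key u hu).differentiableAt.differentiableWithinAt)
      (fun u hu => (key u hu).deriv) hw h00
    simp only [hG, sub_self, neg_zero, Complex.exp_zero, mul_one] at this
    rw [← this, mul_assoc, ← Complex.exp_add]
    simp [hG]
  have hGd : DifferentiableOn ℂ G (Metric.ball 0 r) := hgd.sub_const _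
  have hRe : Set.MapsTo G (Metric.ball 0 r) {z | z.re ≤ M} := by
    intro w hw
    have h1 := hb w hw
    rw [hconst w hw, norm_mul, Complex.norm_exp, mul_comm] at h1
    have h2 : 0 < ‖h 0‖ := norm_pos_iff.2 (h0 0 h00)
    exact Real.exp_le_exp.1 (le_of_mul_le_mul_right h1 h2)
  have hGb : ∀ w : ℂ, ‖w‖ ≤ 3 * r / 4 → ‖G w‖ ≤ 6 * M := by
    intro w hw
    have hwr : w ∈ Metric.ball (0 : ℂ) r := by
      rw [mem_ball_zero_iff]; linarith
    refine (Complex.borelCaratheodory_zero hM hGd hRe hr hwr (by simp [hG])).trans ?_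
    rw [div_le_iff₀ (by linarith)]
    nlinarith
  have hzb : z ∈ Metric.ball (0 : ℂ) r := by rw [mem_ball_zero_iff]; linarith
  have hderiv : deriv G z = logDeriv h z := ((hg z hzb).sub_const _).deriv
  rw [← hderiv]
  have hsub : Metric.closedBall z (r / 4) ⊆ Metric.ball (0 : ℂ) r := by
    intro w hw
    rw [mem_closedBall_iff_norm] at hw
    rw [mem_ball_zero_iff]
    have := norm_le_norm_sub_add w z
    linarith
  refine (Complex.norm_deriv_le_of_forall_mem_sphere_norm_le (R := r / 4) (C := 6 * M)
    (by positivity) ((hGd.mono ?_).diffContOnCl_ball (U := Metric.ball (0 : ℂ) r) ?_) ?_).trans ?_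
  · exact subset_rfl
  · exact hsub
  · intro w hw
    apply hGb
    rw [mem_sphere_iff_norm] at hw
    have := norm_le_norm_sub_add w z
    linarith
  · apply le_of_eq; field_simp; norm_num

/-- Dividing out a zero `ρ` in the disc of radius `r` halves the ratio of the maximum on the disc of
radius `3 r` to the central value, and adds `1 / ρ` to the logarithmic derivative at `0`. -/
lemma divide_out_zero {f : ℂ → ℂ} {r B : ℝ} (hr : 0 < r) {ρ : ℂ} (hρ : ‖ρ‖ ≤ r)
    (hfρ : f ρ = 0)
    (hd : DifferentiableOn ℂ f (Metric.ball 0 (4 * r))) (hf0 : f 0 ≠ 0)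
    (hb : ∀ z : ℂ, ‖z‖ ≤ 3 * r → ‖f z‖ ≤ B * ‖f 0‖) :
    DifferentiableOn ℂ (dslope f ρ) (Metric.ball 0 (4 * r)) ∧ dslope f ρ 0 ≠ 0 ∧
    (∀ z : ℂ, ‖z‖ ≤ 3 * r → ‖dslope f ρ z‖ ≤ B / 2 * ‖dslope f ρ 0‖) ∧
    (∀ z, dslope f ρ z = 0 → f z = 0) ∧
    logDeriv f 0 = logDeriv (dslope f ρ) 0 - 1 / ρ := by
  have hρ0 : ρ ≠ 0 := by rintro rfl; exact hf0 hfρ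
  have hρn : 0 < ‖ρ‖ := norm_pos_iff.2 hρ0
  have hmul : ∀ z, f z = (z - ρ) * dslope f ρ z := by
    intro z
    have := sub_smul_dslope f ρ z
    rw [hfρ, sub_zero, smul_eq_mul] at this
    exact this.symm
  have hdd : DifferentiableOn ℂ (dslope f ρ) (Metric.ball 0 (4 * r)) := by
    refine (Complex.differentiableOn_dslope (Metric.isOpen_ball.mem_nhds ?_)).2 hd
    rw [mem_ball_zero_iff]; linarith
  have h0 : dslope f ρ 0 ≠ 0 := by
    intro h; apply hf0; rw [hmul, h, mul_zero]
  refine ⟨hdd, h0, ?_, ?_, ?_⟩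
  · have hB : 0 ≤ B := by
      have h1 := hb 0 (by simp; positivity)
      have h2 : 0 < ‖f 0‖ := norm_pos_iff.2 hf0
      by_contra! h
      nlinarith
    have hf0n : ‖f 0‖ = ‖ρ‖ * ‖dslope f ρ 0‖ := by rw [hmul 0]; simp
    intro z hz
    refine Complex.norm_le_of_forall_mem_frontier_norm_le (U := Metric.ball (0 : ℂ) (3 * r))
      Metric.isBounded_ball (hdd.diffContOnCl_ball ?_) ?_ ?_
    · exact Metric.closedBall_subset_ball (by linarith)
    · intro w hw
      rw [frontier_ball _ (by positivity), mem_sphere_zero_iff_norm] at hw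
      have h1 := hb w hw.le
      rw [hmul w, norm_mul, hf0n] at h1
      have h2 : 2 * r ≤ ‖w - ρ‖ := by
        have := norm_sub_norm_le w ρ
        linarith
      have h3 : 2 * r * ‖dslope f ρ w‖ ≤ B * (r * ‖dslope f ρ 0‖) := by
        calc 2 * r * ‖dslope f ρ w‖ ≤ ‖w - ρ‖ * ‖dslope f ρ w‖ := by gcongr
          _ ≤ _ := h1
          _ ≤ _ := by gcongr
      have h4 : r * ‖dslope f ρ w‖ ≤ r * (B / 2 * ‖dslope f ρ 0‖) := by linarith
      exact le_of_mul_le_mul_left h4 hr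
    · rw [closure_ball _ (by positivity), mem_closedBall_zero_iff]; exact hz
  · intro z hz; rw [hmul, hz, mul_zero]
  · have : f = fun z => (z - ρ) * dslope f ρ z := funext hmul
    conv_lhs => rw [this]
    rw [logDeriv_mul (f := fun z => z - ρ) (g := dslope f ρ) 0 (by simpa using hρ0) h0
      (by fun_prop)
      (hdd.differentiableAt (Metric.isOpen_ball.mem_nhds (Metric.mem_ball_self (by positivity))))]
    simp [logDeriv_apply]
    ring

/-- Landau's inequality: zeros in the left half-plane contribute nonnegatively to the real part of
the logarithmic derivative at the centre. The proof divides the zeros in the disc of radius `r` out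
one by one; each division halves `B ≥ 1`, so there are fewer than `n` of them when `B < 2 ^ n`. -/
lemma re_logDeriv_ge_aux {r M : ℝ} (hr : 0 < r) (hM : 0 < M) (n : ℕ) :
    ∀ (f : ℂ → ℂ) (B : ℝ), B < 2 ^ n → B ≤ Real.exp M →
    DifferentiableOn ℂ f (Metric.ball 0 (4 * r)) → f 0 ≠ 0 →
    (∀ z : ℂ, ‖z‖ ≤ 3 * r → ‖f z‖ ≤ B * ‖f 0‖) →
    (∀ z : ℂ, ‖z‖ ≤ r → f z = 0 → z.re ≤ 0) → -(24 * M / r) ≤ (logDeriv f 0).re := by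
  induction n with
  | zero =>
    intro f B hB _ _ hf0 hb _
    have h1 := hb 0 (by simp; positivity)
    have h2 : 0 < ‖f 0‖ := norm_pos_iff.2 hf0
    simp only [pow_zero] at hB
    nlinarith
  | succ n ih =>
    intro f B hB hBM hd hf0 hb hz
    by_cases hex : ∃ ρ : ℂ, ‖ρ‖ ≤ r ∧ f ρ = 0
    · obtain ⟨ρ, hρ, hfρ⟩ := hex
      obtain ⟨h1, h2, h3, h4, h5⟩ := divide_out_zero hr hρ hfρ hd hf0 hb
      have h6 := ih (dslope f ρ) (B / 2) (by rw [pow_succ] at hB; linarith)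
        (by linarith [Real.exp_pos M]) h1 h2 h3 (fun z hzr hz0 => hz z hzr (h4 z hz0))
      rw [h5, Complex.sub_re]
      have h7 : (1 / ρ).re ≤ 0 := by
        rw [one_div, Complex.inv_re]
        exact div_nonpos_of_nonpos_of_nonneg (hz ρ hρ hfρ) (Complex.normSq_nonneg _)
      linarith
    · push Not at hex
      have h1 : ‖logDeriv f 0‖ ≤ 24 * M / r := by
        refine norm_logDeriv_le_of_zero_free hr hM (hd.mono (Metric.ball_subset_ball (by linarith)))
          (fun z hz' => hex z (mem_ball_zero_iff.1 hz').le) (fun z hz' => ?_) (by simp; positivity)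
        refine (hb z (by have := mem_ball_zero_iff.1 hz'; linarith)).trans ?_
        gcongr
      have := Complex.abs_re_le_norm (logDeriv f 0)
      have := neg_abs_le (logDeriv f 0).re
      linarith

lemma re_logDeriv_ge {r M : ℝ} (hr : 0 < r) (hM : 0 < M) {f : ℂ → ℂ}
    (hd : DifferentiableOn ℂ f (Metric.ball 0 (4 * r))) (hf0 : f 0 ≠ 0)
    (hb : ∀ z : ℂ, ‖z‖ ≤ 3 * r → ‖f z‖ ≤ Real.exp M * ‖f 0‖)
    (hz : ∀ z : ℂ, ‖z‖ ≤ r → f z = 0 → z.re ≤ 0) : -(24 * M / r) ≤ (logDeriv f 0).re := by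
  obtain ⟨n, hn⟩ := pow_unbounded_of_one_lt (Real.exp M) (one_lt_two)
  exact re_logDeriv_ge_aux hr hM n f _ hn le_rfl hd hf0 hb hz

/-- Landau's inequality keeping the contribution of one zero `-β` to the left of the centre. -/
lemma re_logDeriv_ge_of_zero {r M : ℝ} (hr : 0 < r) (hM : 0 < M) {f : ℂ → ℂ}
    (hd : DifferentiableOn ℂ f (Metric.ball 0 (4 * r))) (hf0 : f 0 ≠ 0)
    (hb : ∀ z : ℂ, ‖z‖ ≤ 3 * r → ‖f z‖ ≤ Real.exp M * ‖f 0‖)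
    (hz : ∀ z : ℂ, ‖z‖ ≤ r → f z = 0 → z.re ≤ 0) {β : ℝ} (hβ : 0 < β) (hβr : β ≤ r)
    (hfβ : f (-β : ℂ) = 0) : 1 / β - 24 * M / r ≤ (logDeriv f 0).re := by
  obtain ⟨h1, h2, h3, h4, h5⟩ := divide_out_zero hr (ρ := (-β : ℂ))
    (by simpa [abs_of_pos hβ] using hβr) hfβ hd hf0 hb
  have h6 := re_logDeriv_ge hr hM h1 h2 (fun z hzr => (h3 z hzr).trans (by
    gcongr
    linarith [Real.exp_pos M])) (fun z hzr hz0 => hz z hzr (h4 z hz0))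
  rw [h5, Complex.sub_re]
  have h7 : (1 / (-β : ℂ)).re = - (1 / β) := by
    have : (1 / (-β : ℂ)) = ((-(1 / β) : ℝ) : ℂ) := by push_cast; ring
    rw [this, Complex.ofReal_re]
  rw [h7]
  linarith

/-! ### Polynomial growth of the `L`-functions to the left of the line of absolute convergence -/

section Growth

set_option linter.unusedSectionVars false

variable {k : ℕ} [NeZero k] (χ : DirichletCharacter ℂ k)

/-- The mean value of a Dirichlet character over one period. -/
noncomputable def charMean : ℂ := (∑ a ∈ range k, χ (a : ℕ)) / k

/-- The error term `∑_{n ≤ u} χ(n) - u * charMean χ` for `u > 1`, extended by `0` to `u ≤ 1`. -/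
noncomputable def charError (u : ℝ) : ℂ :=
  (Set.Ioi (1 : ℝ)).indicator (fun u : ℝ => ∑ n ∈ Icc 1 ⌊u⌋₊, χ (n : ℕ) - charMean χ * u) u

/-- The holomorphic continuation of `(s - 1) * L(s, χ)` to `Re s > 0` given by partial summation. -/
noncomputable def regularizedL (s : ℂ) : ℂ :=
  charMean χ * s + s * (s - 1) * mellin (charError χ) (-s)

lemma norm_charMean_le : ‖charMean χ‖ ≤ 1 := by
  have hk : (0 : ℝ) < k := by exact_mod_cast Nat.pos_of_ne_zero (NeZero.ne k)
  rw [charMean, norm_div, Complex.norm_natCast, div_le_one hk]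
  refine (norm_sum_le_of_le _ (fun a _ => χ.norm_le_one _)).trans ?_
  simp

lemma norm_sum_char_sub_le (N : ℕ) :
    ‖∑ n ∈ range N, χ (n : ℕ) - charMean χ * N‖ ≤ 2 * k := by
  have hk : (k : ℂ) ≠ 0 := by exact_mod_cast NeZero.ne k
  set D : ℕ → ℂ := fun N => ∑ n ∈ range N, χ (n : ℕ) - charMean χ * N with hD
  have hper : Function.Periodic D k := by
    intro N
    induction N with
    | zero => simp [hD, charMean]
    | succ N ih =>
      have e1 : D (N + 1) = D N + (χ (N : ℕ) - charMean χ) := by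
        simp only [hD, sum_range_succ]; push_cast; ring
      have e2 : D (N + 1 + k) = D (N + k) + (χ (N : ℕ) - charMean χ) := by
        rw [show N + 1 + k = (N + k) + 1 by ring]
        simp only [hD, sum_range_succ]; push_cast; simp; ring
      rw [e1, e2, ih]
  have h1 : D N = D (N % k) := (hper.map_mod_nat N).symm
  change ‖D N‖ ≤ _
  rw [h1]
  have h2 : N % k < k := Nat.mod_lt _ (Nat.pos_of_ne_zero (NeZero.ne k))
  generalize N % k = r at h2
  have h3 : ‖∑ n ∈ range r, χ (n : ℕ)‖ ≤ r := by
    refine (norm_sum_le_of_le _ (fun a _ => χ.norm_le_one _)).trans ?_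
    simp
  have h4 : ‖charMean χ * r‖ ≤ r := by
    rw [norm_mul, Complex.norm_natCast]
    exact mul_le_of_le_one_left (by positivity) (norm_charMean_le χ)
  have h5 : (r : ℝ) ≤ k := by exact_mod_cast h2.le
  refine (norm_sub_le _ _).trans ?_
  linarith

lemma norm_charError_le (u : ℝ) : ‖charError χ u‖ ≤ 2 * k + 3 := by
  have hk : (0 : ℝ) ≤ k := by positivity
  by_cases hu : u ∈ Set.Ioi (1 : ℝ)
  swap
  · rw [charError, Set.indicator_of_notMem hu, norm_zero]; linarith
  rw [charError, Set.indicator_of_mem hu]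
  have hu1 : (1 : ℝ) < u := hu
  have e1 : ∑ n ∈ Icc 1 ⌊u⌋₊, χ (n : ℕ) = ∑ n ∈ range (⌊u⌋₊ + 1), χ (n : ℕ) - χ (0 : ℕ) := by
    rw [Finset.sum_range_eq_add_Ico _ (by omega), add_sub_cancel_left]
    rfl
  have e2 : ∑ n ∈ Icc 1 ⌊u⌋₊, χ (n : ℕ) - charMean χ * u =
      (∑ n ∈ range (⌊u⌋₊ + 1), χ (n : ℕ) - charMean χ * (⌊u⌋₊ + 1 : ℕ)) +
      (charMean χ * ((⌊u⌋₊ + 1 - u : ℝ) : ℂ) - χ (0 : ℕ)) := by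
    rw [e1]; push_cast; ring
  rw [e2]
  have h1 := norm_sum_char_sub_le χ (⌊u⌋₊ + 1)
  have h2 : ‖charMean χ * ((⌊u⌋₊ + 1 - u : ℝ) : ℂ)‖ ≤ 1 := by
    rw [norm_mul, Complex.norm_real, Real.norm_eq_abs]
    have h3 := Nat.floor_le (show (0 : ℝ) ≤ u by linarith)
    have h4 := Nat.lt_floor_add_one u
    exact mul_le_one₀ (norm_charMean_le χ) (abs_nonneg _) (abs_le.2 ⟨by linarith, by linarith⟩)
  have h3 := χ.norm_le_one ((0 : ℕ) : ZMod k)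
  refine (norm_add_le _ _).trans ?_
  have := norm_sub_le (charMean χ * ((⌊u⌋₊ + 1 - u : ℝ) : ℂ)) (χ (0 : ℕ))
  linarith

lemma measurable_charError : Measurable (charError χ) := by
  unfold charError
  refine Measurable.indicator ?_ measurableSet_Ioi
  refine Measurable.sub ?_ (by fun_prop)
  exact (measurable_from_nat (f := fun m : ℕ => ∑ n ∈ Icc 1 m, χ (n : ℕ))).comp
    Nat.measurable_floor

lemma locallyIntegrableOn_charError :
    MeasureTheory.LocallyIntegrableOn (charError χ) (Set.Ioi 0) := by
  refine MeasureTheory.LocallyIntegrable.locallyIntegrableOn ?_ _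
  intro x
  refine ⟨Metric.ball x 1, Metric.ball_mem_nhds x one_pos, ?_⟩
  exact MeasureTheory.Measure.integrableOn_of_bounded (M := 2 * k + 3)
    (by simp) (measurable_charError χ).aestronglyMeasurable
    (Filter.Eventually.of_forall (norm_charError_le χ))

lemma charError_isBigO_atTop : charError χ =O[Filter.atTop] (fun t : ℝ => t ^ (-(0 : ℝ))) := by
  refine Asymptotics.IsBigO.of_bound (2 * k + 3) (Filter.Eventually.of_forall fun u => ?_)
  simpa using norm_charError_le χ u

lemma charError_isBigO_zero (b : ℝ) :
    charError χ =O[nhdsWithin 0 (Set.Ioi 0)] (fun t : ℝ => t ^ (-b)) := by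
  have : charError χ =ᶠ[nhdsWithin 0 (Set.Ioi 0)] 0 := by
    refine Filter.Eventually.filter_mono nhdsWithin_le_nhds ?_
    filter_upwards [Iio_mem_nhds (zero_lt_one' ℝ)] with u hu
    rw [charError, Set.indicator_of_notMem]
    · rfl
    · simpa using (le_of_lt hu)
  exact this.trans_isBigO (Asymptotics.isBigO_zero _ _)

lemma mellinConvergent_charError {s : ℂ} (hs : 0 < s.re) :
    MellinConvergent (charError χ) (-s) :=
  mellinConvergent_of_isBigO_rpow (locallyIntegrableOn_charError χ) (charError_isBigO_atTop χ)
    (by simpa using hs) (charError_isBigO_zero χ (-s.re - 1)) (by simp)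

lemma differentiableAt_regularizedL {s : ℂ} (hs : 0 < s.re) :
    DifferentiableAt ℂ (regularizedL χ) s := by
  have h : DifferentiableAt ℂ (mellin (charError χ)) (-s) :=
    mellin_differentiableAt_of_isBigO_rpow (locallyIntegrableOn_charError χ)
      (charError_isBigO_atTop χ)
      (by simpa using hs) (charError_isBigO_zero χ (-s.re - 1)) (by simp)
  have h2 : DifferentiableAt ℂ (fun s => mellin (charError χ) (-s)) s :=
    DifferentiableAt.comp (𝕜 := ℂ) s (g := mellin (charError χ)) (f := fun s => -s) h (by fun_prop)
  unfold regularizedL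
  fun_prop

lemma mellin_charError_eq (s : ℂ) : mellin (charError χ) (-s) =
    ∫ t in Set.Ioi (1 : ℝ), (t : ℂ) ^ (-s - 1) • charError χ t := by
  rw [mellin]
  refine (MeasureTheory.setIntegral_eq_of_subset_of_forall_sdiff_eq_zero measurableSet_Ioi
    (Set.Ioi_subset_Ioi (zero_le_one' ℝ)) (fun t ht => ?_))
  rw [charError, Set.indicator_of_notMem ht.2, smul_zero]

lemma norm_mellin_charError_le {s : ℂ} (hs : 0 < s.re) :
    ‖mellin (charError χ) (-s)‖ ≤ (2 * k + 3) / s.re := by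
  have e := mellin_charError_eq χ s
  rw [e]
  have hlt : -s.re - 1 < -1 := by linarith
  have h1 : ∫ t in Set.Ioi (1 : ℝ), (2 * k + 3) * t ^ (-s.re - 1) = (2 * k + 3) / s.re := by
    rw [MeasureTheory.integral_const_mul, integral_Ioi_rpow_of_lt hlt one_pos]
    simp
    field_simp
  rw [← h1]
  refine MeasureTheory.norm_integral_le_of_norm_le
    ((integrableOn_Ioi_rpow_of_lt hlt one_pos).const_mul _) ?_
  refine (MeasureTheory.ae_restrict_iff' measurableSet_Ioi).2 (Filter.Eventually.of_forall ?_)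
  intro t ht
  have ht0 : (0 : ℝ) < t := lt_trans one_pos ht
  rw [norm_smul, Complex.norm_cpow_eq_rpow_re_of_pos ht0, mul_comm]
  have : (-s - 1).re = -s.re - 1 := by simp
  rw [this]
  gcongr
  exact norm_charError_le χ t

lemma regularizedL_eq {s : ℂ} (hs : 1 < s.re) :
    regularizedL χ s = (s - 1) * LSeries (fun n => χ (n : ℕ)) s := by
  have hO : (fun n ↦ ∑ j ∈ Icc 1 n, χ (j : ℕ)) =O[Filter.atTop] fun n : ℕ ↦ (n : ℝ) ^ (1 : ℝ) := by
    refine Asymptotics.IsBigO.of_bound 1 (Filter.Eventually.of_forall fun n => ?_)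
    refine (norm_sum_le_of_le _ (fun a _ => χ.norm_le_one _)).trans ?_
    simp
  have hs1 : s - 1 ≠ 0 := by
    intro h
    have := congrArg Complex.re h
    simp at this; linarith
  rw [LSeries_eq_mul_integral (fun n => χ (n : ℕ)) zero_le_one hs
    (χ.LSeriesSummable_of_one_lt_re hs) hO]
  have hs0 : 0 < s.re := by linarith
  have hIntegr : MeasureTheory.IntegrableOn (fun t : ℝ => (t : ℂ) ^ (-s - 1) • charError χ t)
      (Set.Ioi (1 : ℝ)) :=
    (mellinConvergent_charError χ hs0).mono_set (Set.Ioi_subset_Ioi zero_le_one)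
  have hlt : (-s).re < -1 := by simpa using hs
  have hIntegr2 : MeasureTheory.IntegrableOn (fun t : ℝ => charMean χ * (t : ℂ) ^ (-s))
      (Set.Ioi (1 : ℝ)) := (integrableOn_Ioi_cpow_of_lt hlt one_pos).const_mul _
  have e := mellin_charError_eq χ s
  have e2 : ∫ t in Set.Ioi (1 : ℝ), (∑ j ∈ Icc 1 ⌊t⌋₊, χ (j : ℕ)) * (t : ℂ) ^ (-(s + 1)) =
      charMean χ / (s - 1) + mellin (charError χ) (-s) := by
    rw [e]
    have e3 : ∫ t in Set.Ioi (1 : ℝ), charMean χ * (t : ℂ) ^ (-s) = charMean χ / (s - 1) := by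
      rw [MeasureTheory.integral_const_mul, integral_Ioi_cpow_of_lt hlt one_pos]
      have : -s + 1 ≠ 0 := by
        intro h; apply hs1; linear_combination -h
      simp
      field_simp
      ring
    rw [← e3, ← MeasureTheory.integral_add hIntegr2 hIntegr]
    refine MeasureTheory.setIntegral_congr_fun measurableSet_Ioi ?_
    intro t ht
    have ht0 : (t : ℂ) ≠ 0 := by
      have : (0 : ℝ) < t := lt_trans one_pos ht
      exact_mod_cast this.ne'
    simp only [charError, Set.indicator_of_mem ht, smul_eq_mul]
    have e4 : (t : ℂ) ^ (-s) = (t : ℂ) ^ (-(s + 1)) * t := by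
      rw [show -s = -(s + 1) + 1 by ring, Complex.cpow_add _ _ ht0, Complex.cpow_one]
    rw [e4, show -s - 1 = -(s + 1) by ring]
    ring
  rw [e2, regularizedL]
  field_simp

lemma norm_regularizedL_le {s : ℂ} (hs : 0 < s.re) :
    ‖regularizedL χ s‖ ≤ ‖s‖ + ‖s‖ * ‖s - 1‖ * ((2 * k + 3) / s.re) := by
  refine (norm_add_le _ _).trans ?_
  rw [norm_mul, norm_mul, norm_mul]
  gcongr
  · exact mul_le_of_le_one_left (norm_nonneg _) (norm_charMean_le χ)
  · exact norm_mellin_charError_le χ hs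

end Growth

/-! ### The classical zero-free region -/

section ZeroFree

/-- The coefficients `χ(n) Λ(n)` of `-L'/L(s, χ)`. -/
noncomputable def twist {k : ℕ} (χ : DirichletCharacter ℂ k) (n : ℕ) : ℂ :=
  χ (n : ℕ) * (ArithmeticFunction.vonMangoldt n : ℂ)

variable {k : ℕ} [NeZero k] (χ : DirichletCharacter ℂ k)

set_option linter.unusedSectionVars false

lemma isOpen_one_lt_re : IsOpen {s : ℂ | 1 < s.re} := isOpen_lt continuous_const Complex.continuous_re

lemma regularizedL_ne_zero {s : ℂ} (hs : 1 < s.re) : regularizedL χ s ≠ 0 := by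
  rw [regularizedL_eq χ hs]
  refine mul_ne_zero ?_ (χ.LSeries_ne_zero_of_one_lt_re hs)
  intro h
  have := congrArg Complex.re h
  simp at this; linarith

lemma LSeriesSummable_twist {s : ℂ} (hs : 1 < s.re) : LSeriesSummable (twist χ) s :=
  χ.LSeriesSummable_twist_vonMangoldt hs

lemma LSeries_twist_eq {s : ℂ} (hs : 1 < s.re) :
    LSeries (twist χ) s = - logDeriv (LSeries (fun n => χ (n : ℕ))) s := by
  have := χ.LSeries_twist_vonMangoldt_eq hs
  rw [logDeriv_apply, ← neg_div, ← this]
  rfl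

lemma logDeriv_regularizedL {s : ℂ} (hs : 1 < s.re) :
    logDeriv (regularizedL χ) s = 1 / (s - 1) - LSeries (twist χ) s := by
  have hs1 : s - 1 ≠ 0 := by
    intro h
    have := congrArg Complex.re h
    simp at this; linarith
  have hev : regularizedL χ =ᶠ[nhds s] fun s => (s - 1) * LSeries (fun n => χ (n : ℕ)) s := by
    filter_upwards [isOpen_one_lt_re.mem_nhds hs] with z hz using regularizedL_eq χ hz
  have hL : DifferentiableAt ℂ (LSeries (fun n => χ (n : ℕ))) s := by
    refine (LSeries_hasDerivAt ?_).differentiableAt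
    rw [χ.absicssaOfAbsConv_eq_one (NeZero.ne k)]
    exact_mod_cast hs
  have e : logDeriv (regularizedL χ) s =
      logDeriv (fun s => (s - 1) * LSeries (fun n => χ (n : ℕ)) s) s := by
    rw [logDeriv_apply, logDeriv_apply, hev.deriv_eq, hev.eq_of_nhds]
  rw [e, logDeriv_mul (f := fun s => s - 1) s hs1 (χ.LSeries_ne_zero_of_one_lt_re hs)
    (by fun_prop) hL, LSeries_twist_eq χ hs, sub_neg_eq_add]
  congr 1
  simp [logDeriv_apply]

lemma tsum_rpow_le {σ : ℝ} (h1 : 1 < σ) (h2 : σ ≤ 2) :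
    ∑' n : ℕ, ‖LSeries.term 1 σ n‖ ≤ 7 / (σ - 1) := by
  have hs : 1 < (σ : ℂ).re := by simpa using h1
  have e := regularizedL_eq (1 : DirichletCharacter ℂ 1) hs
  have hone : (fun n : ℕ => (1 : DirichletCharacter ℂ 1) (n : ℕ)) = 1 :=
    DirichletCharacter.modOne_eq_one
  rw [hone] at e
  have hb := norm_regularizedL_le (1 : DirichletCharacter ℂ 1) (s := σ) (by simp; linarith)
  have hterm : ∀ n : ℕ, LSeries.term 1 (σ : ℂ) n = ((‖LSeries.term 1 (σ : ℂ) n‖ : ℝ) : ℂ) := by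
    intro n
    rcases eq_or_ne n 0 with rfl | hn
    · simp
    · rw [LSeries.norm_term_eq, LSeries.term_of_ne_zero hn, if_neg hn]
      simp only [Pi.one_apply, norm_one, Complex.ofReal_re]
      rw [Complex.ofReal_div, Complex.ofReal_cpow (by positivity)]
      simp
  have e2 : LSeries 1 (σ : ℂ) = ((∑' n : ℕ, ‖LSeries.term 1 σ n‖ : ℝ) : ℂ) := by
    rw [LSeries, tsum_congr hterm, Complex.ofReal_tsum]
  have h0 : 0 ≤ ∑' n : ℕ, ‖LSeries.term 1 σ n‖ := tsum_nonneg fun n => norm_nonneg _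
  rw [e, e2, norm_mul, Complex.norm_real, Real.norm_eq_abs, abs_of_nonneg h0] at hb
  have e3 : ‖(σ : ℂ) - 1‖ = σ - 1 := by
    rw [← Complex.ofReal_one, ← Complex.ofReal_sub, Complex.norm_real, Real.norm_eq_abs,
      abs_of_pos (by linarith)]
  have e4 : ‖(σ : ℂ)‖ = σ := by
    rw [Complex.norm_real, Real.norm_eq_abs, abs_of_pos (by linarith)]
  rw [e3, e4, Complex.ofReal_re] at hb
  rw [le_div_iff₀ (by linarith)]
  have e5 : σ * (σ - 1) * ((2 * ((1 : ℕ) : ℝ) + 3) / σ) = 5 * (σ - 1) := by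
    have : σ ≠ 0 := by linarith
    field_simp; norm_num
  rw [e5] at hb
  nlinarith

lemma norm_LSeries_ge {s : ℂ} (h1 : 1 < s.re) (h2 : s.re ≤ 2) :
    (s.re - 1) / 7 ≤ ‖LSeries (fun n => χ (n : ℕ)) s‖ := by
  have e := DirichletCharacter.LSeries.mul_mu_eq_one χ h1
  set g : ℕ → ℂ := (fun n : ℕ => χ (n : ℕ)) * fun n => ((ArithmeticFunction.moebius n : ℤ) : ℂ)
  have hg : ‖LSeries g s‖ ≤ 7 / (s.re - 1) := by
    refine le_trans ?_ (tsum_rpow_le h1 h2)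
    have hs1 : Summable fun n : ℕ => ‖LSeries.term 1 (s.re : ℂ) n‖ :=
      (LSeriesSummable_one_iff.2 (by simpa using h1)).norm
    have hle : ∀ n, ‖LSeries.term g s n‖ ≤ ‖LSeries.term 1 (s.re : ℂ) n‖ := by
      intro n
      rw [LSeries.norm_term_eq, LSeries.norm_term_eq]
      split_ifs
      · exact le_rfl
      · simp only [Complex.ofReal_re]
        gcongr
        simp only [g, Pi.mul_apply, Pi.one_apply, norm_one, norm_mul]
        refine mul_le_one₀ (χ.norm_le_one _) (norm_nonneg _) ?_
        rw [Complex.norm_intCast]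
        exact_mod_cast ArithmeticFunction.abs_moebius_le_one
    exact tsum_of_norm_bounded hs1.hasSum hle
  have h3 : ‖LSeries (fun n => χ (n : ℕ)) s‖ * ‖LSeries g s‖ = 1 := by
    rw [← norm_mul]
    simpa using congrArg norm e
  have h4 : 0 ≤ ‖LSeries (fun n => χ (n : ℕ)) s‖ := norm_nonneg _
  have h5 : 1 ≤ ‖LSeries (fun n => χ (n : ℕ)) s‖ * (7 / (s.re - 1)) := by
    calc (1 : ℝ) = _ := h3.symm
      _ ≤ _ := by gcongr
  rw [← mul_div_assoc, le_div_iff₀ (by linarith)] at h5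
  linarith

/-- `∑ Λ(n) n^{-σ} ≤ 1 / (σ - 1) + O(1)`, since `(s - 1) ζ(s)` is holomorphic and does not vanish on
`[1, 2]`. -/
lemma exists_tsum_vonMangoldt_le : ∃ C : ℝ, 0 < C ∧ ∀ σ : ℝ, 1 < σ → σ ≤ 2 →
    ∑' n : ℕ, ‖LSeries.term (fun n => (ArithmeticFunction.vonMangoldt n : ℂ)) σ n‖
      ≤ 1 / (σ - 1) + C := by
  set R := regularizedL (1 : DirichletCharacter ℂ 1) with hR
  have hR1 : R 1 ≠ 0 := by
    have h1 : (1 : DirichletCharacter ℂ 1) 0 = 1 := MulChar.one_apply (isUnit_of_subsingleton _)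
    simp [hR, regularizedL, charMean, h1]
  have hRσ : ∀ σ ∈ Set.Icc (1 : ℝ) 2, R σ ≠ 0 := by
    intro σ hσ
    rcases hσ.1.eq_or_lt with h | h
    · rw [← h]; exact_mod_cast hR1
    · exact regularizedL_ne_zero _ (by simpa using h)
  have hopen : IsOpen {s : ℂ | 0 < s.re} := isOpen_lt continuous_const Complex.continuous_re
  have hd : DifferentiableOn ℂ R {s : ℂ | 0 < s.re} := fun s hs =>
    (differentiableAt_regularizedL _ hs).differentiableWithinAt
  have hcont : ContinuousOn (fun σ : ℝ => logDeriv R σ) (Set.Icc 1 2) := by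
    have h1 : ContinuousOn (fun σ : ℝ => R σ) (Set.Icc 1 2) :=
      hd.continuousOn.comp Complex.continuous_ofReal.continuousOn
        (fun σ hσ => by simp; linarith [hσ.1])
    have h2 : ContinuousOn (fun σ : ℝ => deriv R σ) (Set.Icc 1 2) :=
      (hd.deriv hopen).continuousOn.comp Complex.continuous_ofReal.continuousOn
        (fun σ hσ => by simp; linarith [hσ.1])
    exact h2.div h1 hRσ
  obtain ⟨C, hC⟩ := isCompact_Icc.exists_bound_of_continuousOn hcont
  refine ⟨|C| + 1, by positivity, fun σ h1 h2 => ?_⟩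
  have hs : 1 < (σ : ℂ).re := by simpa using h1
  have h3 := logDeriv_regularizedL (1 : DirichletCharacter ℂ 1) hs
  have h4 := hC σ ⟨h1.le, h2⟩
  have htw : twist (1 : DirichletCharacter ℂ 1) =
      fun n => (ArithmeticFunction.vonMangoldt n : ℂ) := by
    funext n
    have := congrFun (DirichletCharacter.modOne_eq_one (R := ℂ) (χ := 1)) n
    simp only [twist, this, Pi.one_apply, one_mul]
  rw [htw] at h3
  have hterm : ∀ n : ℕ, LSeries.term (fun n => (ArithmeticFunction.vonMangoldt n : ℂ)) (σ : ℂ) n =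
      ((‖LSeries.term (fun n => (ArithmeticFunction.vonMangoldt n : ℂ)) (σ : ℂ) n‖ : ℝ) : ℂ) := by
    intro n
    rcases eq_or_ne n 0 with rfl | hn
    · simp
    · rw [LSeries.norm_term_eq, LSeries.term_of_ne_zero hn, if_neg hn]
      simp only [Complex.ofReal_re, Complex.norm_real, Real.norm_eq_abs,
        abs_of_nonneg ArithmeticFunction.vonMangoldt_nonneg]
      rw [Complex.ofReal_div, Complex.ofReal_cpow (by positivity)]
      simp
  have e2 : LSeries (fun n => (ArithmeticFunction.vonMangoldt n : ℂ)) (σ : ℂ) =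
      ((∑' n : ℕ, ‖LSeries.term (fun n => (ArithmeticFunction.vonMangoldt n : ℂ)) σ n‖ : ℝ) : ℂ) := by
    rw [LSeries, tsum_congr hterm, Complex.ofReal_tsum]
  rw [e2] at h3
  have h5 : ((logDeriv R (σ : ℂ))).re = 1 / (σ - 1) -
      ∑' n : ℕ, ‖LSeries.term (fun n => (ArithmeticFunction.vonMangoldt n : ℂ)) σ n‖ := by
    rw [h3, Complex.sub_re, Complex.ofReal_re]
    congr 1
    rw [← Complex.ofReal_one, ← Complex.ofReal_sub, ← Complex.ofReal_div, Complex.ofReal_re]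
  have h6 := Complex.abs_re_le_norm (logDeriv R (σ : ℂ))
  have h7 := neg_abs_le (logDeriv R (σ : ℂ)).re
  have h8 := le_abs_self C
  linarith

lemma summable_vonMangoldt {σ : ℝ} (h1 : 1 < σ) : Summable fun n : ℕ =>
    ‖LSeries.term (fun n => (ArithmeticFunction.vonMangoldt n : ℂ)) σ n‖ :=
  (ArithmeticFunction.LSeriesSummable_vonMangoldt (by simpa using h1)).norm

lemma norm_LSeries_twist_le {s : ℂ} (h1 : 1 < s.re) : ‖LSeries (twist χ) s‖ ≤
    ∑' n : ℕ, ‖LSeries.term (fun n => (ArithmeticFunction.vonMangoldt n : ℂ)) s.re n‖ := by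
  refine tsum_of_norm_bounded (summable_vonMangoldt h1).hasSum fun n => ?_
  rw [LSeries.norm_term_eq, LSeries.norm_term_eq]
  split_ifs
  · exact le_rfl
  · simp only [Complex.ofReal_re]
    gcongr
    rw [twist, norm_mul]
    exact mul_le_of_le_one_left (norm_nonneg _) (χ.norm_le_one _)

/-- The `3-4-1` inequality for logarithmic derivatives. -/
lemma three_four_one {σ : ℝ} (h1 : 1 < σ) (t : ℝ) :
    0 ≤ 3 * ∑' n : ℕ, ‖LSeries.term (fun n => (ArithmeticFunction.vonMangoldt n : ℂ)) σ n‖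
      + 4 * (LSeries (twist χ) (σ + t * Complex.I)).re
      + (LSeries (twist (χ ^ 2)) (σ + (2 * t : ℝ) * Complex.I)).re := by
  have hs1 : 1 < (σ + t * Complex.I : ℂ).re := by simpa using h1
  have hs2 : 1 < (σ + (2 * t : ℝ) * Complex.I : ℂ).re := by simpa using h1
  have H1 := (summable_vonMangoldt h1).hasSum.mul_left 3
  have H2 := (Complex.hasSum_re (LSeriesSummable_twist χ hs1).hasSum).mul_left 4
  have H3 := Complex.hasSum_re (LSeriesSummable_twist (χ ^ 2) hs2).hasSum
  refine ((H1.add H2).add H3).nonneg fun n => ?_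
  rcases eq_or_ne n 0 with rfl | hn
  · simp
  have hn0 : (n : ℂ) ≠ 0 := by exact_mod_cast hn
  set w : ℂ := χ (n : ℕ) * (n : ℂ) ^ (-(t * Complex.I)) with hw
  have hwn : ‖w‖ ≤ 1 := by
    rw [hw, norm_mul, Complex.norm_natCast_cpow_of_pos (Nat.pos_of_ne_zero hn)]
    simpa using χ.norm_le_one _
  set a : ℝ := ArithmeticFunction.vonMangoldt n / (n : ℝ) ^ σ with ha
  have ha0 : 0 ≤ a := div_nonneg ArithmeticFunction.vonMangoldt_nonneg (by positivity)
  have haC : (a : ℂ) = (ArithmeticFunction.vonMangoldt n : ℂ) * (n : ℂ) ^ (-(σ : ℂ)) := by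
    rw [ha, Complex.ofReal_div, Complex.ofReal_cpow (by positivity), Complex.cpow_neg]
    simp [div_eq_mul_inv]
  have e1 : ‖LSeries.term (fun n => (ArithmeticFunction.vonMangoldt n : ℂ)) σ n‖ = a := by
    rw [LSeries.norm_term_eq, if_neg hn]
    simp [abs_of_nonneg ArithmeticFunction.vonMangoldt_nonneg, ha]
  have e2 : LSeries.term (twist χ) (σ + t * Complex.I) n = (a : ℂ) * w := by
    rw [LSeries.term_of_ne_zero hn, twist, haC, hw, div_eq_mul_inv, ← Complex.cpow_neg, neg_add,
      Complex.cpow_add _ _ hn0]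
    ring
  have e3 : LSeries.term (twist (χ ^ 2)) (σ + (2 * t : ℝ) * Complex.I) n = (a : ℂ) * w ^ 2 := by
    rw [LSeries.term_of_ne_zero hn, twist, haC, hw, div_eq_mul_inv, ← Complex.cpow_neg, neg_add,
      Complex.cpow_add _ _ hn0, mul_pow, ← Complex.cpow_nat_mul, MulChar.pow_apply' _ two_ne_zero]
    push_cast
    ring_nf
  rw [e1, e2, e3, Complex.re_ofReal_mul, Complex.re_ofReal_mul]
  have h2 : w.re ^ 2 + w.im ^ 2 ≤ 1 := by
    have h3 : ‖w‖ ^ 2 ≤ 1 := pow_le_one₀ (norm_nonneg _) hwn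
    rw [Complex.sq_norm, Complex.normSq_apply] at h3
    linarith
  have h3 : (w ^ 2).re = w.re ^ 2 - w.im ^ 2 := by rw [sq, Complex.mul_re]; ring
  rw [h3]
  have : 0 ≤ a * (3 + 4 * w.re + (w.re ^ 2 - w.im ^ 2)) :=
    mul_nonneg ha0 (by nlinarith [sq_nonneg (1 + w.re)])
  linarith

end ZeroFree

section LocalBounds

/-- The constant in the local bounds for `-L'/L`. -/
noncomputable def localConst (k : ℕ) : ℝ := 1 + 192 * (3 + Real.log (7 * (4 * k + 7)))

variable {k : ℕ} [NeZero k] (χ : DirichletCharacter ℂ k)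

set_option linter.unusedSectionVars false

lemma one_le_log_abs_add_three (t : ℝ) : 1 ≤ Real.log (|t| + 3) := by
  rw [Real.le_log_iff_exp_le (by positivity)]
  linarith [Real.exp_one_lt_d9, abs_nonneg t]

lemma log_const_nonneg (k : ℕ) : 0 ≤ Real.log (7 * (4 * (k : ℝ) + 7)) :=
  Real.log_nonneg (by nlinarith [(Nat.cast_nonneg k : (0 : ℝ) ≤ k)])

lemma localConst_ge_one (k : ℕ) : 1 ≤ localConst k := by
  have := log_const_nonneg k
  rw [localConst]; linarith

lemma re_add_mul_I (σ t : ℝ) : (σ + t * Complex.I : ℂ).re = σ := by simp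

lemma norm_regularizedL_ge {σ t : ℝ} (ht : 1 ≤ |t|) (h1 : 1 + 1 / (|t| + 3) ≤ σ) (h2 : σ ≤ 5 / 4) :
    1 / (7 * (|t| + 3)) ≤ ‖regularizedL χ (σ + t * Complex.I)‖ := by
  have h0 : 0 < 1 / (|t| + 3) := by positivity
  have hre : 1 < (σ + t * Complex.I : ℂ).re := by rw [re_add_mul_I]; linarith
  have hL := norm_LSeries_ge χ hre (by rw [re_add_mul_I]; linarith)
  rw [re_add_mul_I] at hL
  rw [regularizedL_eq χ hre, norm_mul]
  have h3 : 1 ≤ ‖(σ + t * Complex.I : ℂ) - 1‖ := by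
    refine ht.trans ?_
    have := Complex.abs_im_le_norm ((σ + t * Complex.I : ℂ) - 1)
    simpa using this
  have h4 : 1 / (7 * (|t| + 3)) ≤ (σ - 1) / 7 := by
    rw [mul_comm, ← div_div]; gcongr; linarith
  calc 1 / (7 * (|t| + 3)) ≤ 1 * ((σ - 1) / 7) := by linarith
    _ ≤ _ := by
        gcongr
        linarith

lemma norm_regularizedL_shift_le {σ t : ℝ} (h1 : 1 ≤ σ) (h2 : σ ≤ 5 / 4) {z : ℂ}
    (hz : ‖z‖ ≤ 3 / 8) :
    ‖regularizedL χ (σ + t * Complex.I + z)‖ ≤ (4 * k + 7) * (|t| + 3) ^ 2 := by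
  have hzre := (abs_le.1 ((Complex.abs_re_le_norm z).trans hz)).1
  have hre : 1 / 2 ≤ (σ + t * Complex.I + z : ℂ).re := by
    rw [Complex.add_re, re_add_mul_I]; linarith
  have hσt : ‖(t * Complex.I : ℂ)‖ = |t| := by simp
  have hσ : ‖(σ : ℂ)‖ = σ := by simp; linarith
  have hσ1 : ‖(σ - 1 : ℂ)‖ = σ - 1 := by
    rw [← Complex.ofReal_one, ← Complex.ofReal_sub, Complex.norm_real, Real.norm_eq_abs,
      abs_of_nonneg (by linarith)]
  have hn1 : ‖(σ + t * Complex.I + z : ℂ)‖ ≤ |t| + 3 := by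
    have := norm_add₃_le (a := (σ : ℂ)) (b := t * Complex.I) (c := z)
    linarith
  have hn2 : ‖(σ + t * Complex.I + z : ℂ) - 1‖ ≤ |t| + 3 := by
    have := norm_add₃_le (a := (σ - 1 : ℂ)) (b := t * Complex.I) (c := z)
    rw [show (σ + t * Complex.I + z : ℂ) - 1 = (σ - 1) + t * Complex.I + z by ring]
    linarith
  refine (norm_regularizedL_le χ (by linarith)).trans ?_
  have h5 : (2 * (k : ℝ) + 3) / (σ + t * Complex.I + z : ℂ).re ≤ 2 * (2 * k + 3) := by
    rw [div_le_iff₀ (by linarith)]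
    nlinarith [(Nat.cast_nonneg k : (0 : ℝ) ≤ k)]
  calc _ ≤ (|t| + 3) + (|t| + 3) * (|t| + 3) * (2 * (2 * k + 3)) := by gcongr
    _ ≤ _ := by nlinarith [abs_nonneg t]

lemma norm_regularizedL_ratio {σ t : ℝ} (ht : 1 ≤ |t|) (h1 : 1 + 1 / (|t| + 3) ≤ σ)
    (h2 : σ ≤ 5 / 4) {z : ℂ} (hz : ‖z‖ ≤ 3 / 8) :
    ‖regularizedL χ (σ + t * Complex.I + z)‖ ≤
      Real.exp ((3 + Real.log (7 * (4 * k + 7))) * Real.log (|t| + 3)) *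
        ‖regularizedL χ (σ + t * Complex.I)‖ := by
  have h0 : 0 < 1 / (|t| + 3) := by positivity
  have hL := one_le_log_abs_add_three t
  have hk := log_const_nonneg k
  have ha := norm_regularizedL_ge χ ht h1 h2
  have hb := norm_regularizedL_shift_le χ (t := t) (by linarith) h2 hz
  refine hb.trans ?_
  have he : 7 * (4 * k + 7) * (|t| + 3) ^ 3 ≤
      Real.exp ((3 + Real.log (7 * (4 * k + 7))) * Real.log (|t| + 3)) := by
    calc (7 * (4 * k + 7) * (|t| + 3) ^ 3 : ℝ)
        = Real.exp (Real.log (7 * (4 * k + 7)) + 3 * Real.log (|t| + 3)) := by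
          rw [Real.exp_add, Real.exp_log (by positivity), mul_comm 3, Real.exp_mul,
            Real.exp_log (by positivity)]
          norm_cast
      _ ≤ _ := by
          gcongr
          nlinarith
  calc ((4 * k + 7) * (|t| + 3) ^ 2 : ℝ)
      = 7 * (4 * k + 7) * (|t| + 3) ^ 3 * (1 / (7 * (|t| + 3))) := by field_simp
    _ ≤ _ := by gcongr

lemma logDeriv_shift (f : ℂ → ℂ) (s : ℂ) : logDeriv (fun z => f (s + z)) 0 = logDeriv f s := by
  simp [logDeriv_apply, deriv_comp_const_add]

lemma re_one_div_sub_one_le {σ t : ℝ} (ht : 1 ≤ |t|) :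
    (1 / ((σ + t * Complex.I : ℂ) - 1)).re ≤ 1 := by
  refine (Complex.re_le_norm _).trans ?_
  have : 1 ≤ ‖(σ + t * Complex.I : ℂ) - 1‖ := by
    refine ht.trans ?_
    have := Complex.abs_im_le_norm ((σ + t * Complex.I : ℂ) - 1)
    simpa using this
  rw [norm_div, norm_one, div_le_one (by linarith)]
  exact this

lemma differentiableOn_shift {σ t : ℝ} (h1 : 1 ≤ σ) :
    DifferentiableOn ℂ (fun z => regularizedL χ (σ + t * Complex.I + z))
      (Metric.ball 0 (4 * (1 / 8))) := by
  intro z hz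
  have hz' : ‖z‖ < 1 / 2 := by
    rw [mem_ball_zero_iff] at hz; linarith
  have h2 := (abs_le.1 ((Complex.abs_re_le_norm z).trans hz'.le)).1
  refine DifferentiableAt.differentiableWithinAt ?_
  refine (differentiableAt_regularizedL χ (s := σ + t * Complex.I + z) ?_).comp z (by fun_prop)
  rw [Complex.add_re, re_add_mul_I]; linarith

lemma zeros_shift {σ t : ℝ} (h1 : 1 < σ) (z : ℂ)
    (hz : regularizedL χ (σ + t * Complex.I + z) = 0) : z.re ≤ 0 := by
  by_contra! h
  refine regularizedL_ne_zero χ ?_ hz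
  rw [Complex.add_re, re_add_mul_I]; linarith

/-- Landau's inequality applied to `(s - 1) L(s, χ)`, whose growth enters through
`norm_regularizedL_ratio`. -/
lemma re_LSeries_twist_le {σ t : ℝ} (ht : 1 ≤ |t|) (h1 : 1 + 1 / (|t| + 3) ≤ σ)
    (h2 : σ ≤ 5 / 4) :
    (LSeries (twist χ) (σ + t * Complex.I)).re ≤ localConst k * Real.log (|t| + 3) := by
  have h0 : 0 < 1 / (|t| + 3) := by positivity
  have hL := one_le_log_abs_add_three t
  have hk := log_const_nonneg k
  have hre : 1 < (σ + t * Complex.I : ℂ).re := by rw [re_add_mul_I]; linarith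
  have := re_logDeriv_ge (f := fun z => regularizedL χ (σ + t * Complex.I + z)) (r := 1 / 8)
    (M := (3 + Real.log (7 * (4 * k + 7))) * Real.log (|t| + 3)) (by norm_num) (by positivity)
    (differentiableOn_shift χ (by linarith)) (by simpa using regularizedL_ne_zero χ hre)
    (fun z hz => by simpa using norm_regularizedL_ratio χ ht h1 h2 (hz.trans (by norm_num)))
    (fun z _ hz => zeros_shift χ (by linarith) z hz)
  rw [logDeriv_shift, logDeriv_regularizedL χ hre, Complex.sub_re] at this
  have h3 := re_one_div_sub_one_le (σ := σ) ht
  rw [localConst]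
  linarith

lemma re_LSeries_twist_le_of_zero {σ t : ℝ} (ht : 1 ≤ |t|) (h1 : 1 + 1 / (|t| + 3) ≤ σ)
    (h2 : σ ≤ 5 / 4) {β : ℝ} (hβ : β < σ) (hβ' : σ - β ≤ 1 / 8)
    (hz : regularizedL χ (β + t * Complex.I) = 0) :
    (LSeries (twist χ) (σ + t * Complex.I)).re ≤
      localConst k * Real.log (|t| + 3) - 1 / (σ - β) := by
  have h0 : 0 < 1 / (|t| + 3) := by positivity
  have hL := one_le_log_abs_add_three t
  have hk := log_const_nonneg k
  have hre : 1 < (σ + t * Complex.I : ℂ).re := by rw [re_add_mul_I]; linarith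
  have := re_logDeriv_ge_of_zero (f := fun z => regularizedL χ (σ + t * Complex.I + z))
    (r := 1 / 8) (β := σ - β)
    (M := (3 + Real.log (7 * (4 * k + 7))) * Real.log (|t| + 3)) (by norm_num) (by positivity)
    (differentiableOn_shift χ (by linarith)) (by simpa using regularizedL_ne_zero χ hre)
    (fun z hz => by simpa using norm_regularizedL_ratio χ ht h1 h2 (hz.trans (by norm_num)))
    (fun z _ hz => zeros_shift χ (by linarith) z hz) (by linarith) hβ' (by
      rw [← hz]; congr 1; push_cast; ring)
  rw [logDeriv_shift, logDeriv_regularizedL χ hre, Complex.sub_re] at this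
  have h3 := re_one_div_sub_one_le (σ := σ) ht
  rw [localConst]
  linarith

end LocalBounds

section ZeroFreeRegion

variable {k : ℕ} [NeZero k]

lemma log_le_two_mul_sqrt {y : ℝ} (hy : 0 < y) : Real.log y ≤ 2 * √y := by
  have h1 := Real.log_le_sub_one_of_pos (Real.sqrt_pos.2 hy)
  have h2 : Real.log y = 2 * Real.log √y := by
    rw [Real.log_sqrt hy.le]; ring
  linarith

lemma one_div_le_div_log {δ t : ℝ} (hδ : 0 < δ) (ht : 4 / δ ^ 2 ≤ |t|) :
    1 / (|t| + 3) ≤ δ / Real.log (|t| + 3) := by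
  have hL := one_le_log_abs_add_three t
  have hy : 0 < |t| + 3 := by positivity
  rw [div_le_div_iff₀ hy (by linarith), one_mul]
  refine (log_le_two_mul_sqrt hy).trans ?_
  have h1 : √(|t| + 3) * √(|t| + 3) = |t| + 3 := Real.mul_self_sqrt hy.le
  have h2 : 2 / δ ≤ √(|t| + 3) := by
    refine Real.le_sqrt_of_sq_le ?_
    rw [div_pow]; norm_num; linarith
  rw [div_le_iff₀ hδ] at h2
  have h3 : 0 ≤ √(|t| + 3) := Real.sqrt_nonneg _
  nlinarith

/-- The classical zero-free region away from the real axis. The constants are uniform in the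
character `χ` modulo `k`, since the argument applies the local bounds to both `χ` and `χ²`. -/
lemma exists_zero_free (k : ℕ) [NeZero k] : ∃ δ : ℝ, 0 < δ ∧ δ ≤ 1 / 16 ∧
    ∀ (χ : DirichletCharacter ℂ k) (s : ℂ), 1 ≤ |s.im| → 4 / δ ^ 2 ≤ |s.im| →
      1 - δ / (7 * Real.log (|s.im| + 3)) < s.re → regularizedL χ s ≠ 0 := by
  obtain ⟨C₀, hC₀, hΛ⟩ := exists_tsum_vonMangoldt_le
  set C₁ := localConst k with hC₁
  have hC₁' : 1 ≤ C₁ := localConst_ge_one k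
  set C := 3 * C₀ + 6 * C₁ with hC
  have hCpos : 0 < C := by positivity
  refine ⟨min (1 / (2 * C)) (1 / 16), by positivity, min_le_right _ _, fun χ s ht ht' hs hzero => ?_⟩
  set δ := min (1 / (2 * C)) (1 / 16) with hδ
  have hδ0 : 0 < δ := by positivity
  have hδ1 : δ ≤ 1 / 16 := min_le_right _ _
  have hδC : C * δ ≤ 1 / 2 := by
    have : δ ≤ 1 / (2 * C) := min_le_left _ _
    calc C * δ ≤ C * (1 / (2 * C)) := by gcongr
      _ = 1 / 2 := by field_simp
  set t := s.im with ht0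
  set β := s.re with hβ0
  set ℒ := Real.log (|t| + 3) with hℒ
  have hL : 1 ≤ ℒ := one_le_log_abs_add_three t
  have hβ1 : β ≤ 1 := by
    by_contra! h
    exact regularizedL_ne_zero χ h hzero
  have hz : regularizedL χ (β + t * Complex.I) = 0 := by
    rw [hβ0, ht0, Complex.re_add_im]; exact hzero
  set σ := 1 + δ / ℒ with hσ
  have hσ1 : 1 + 1 / (|t| + 3) ≤ σ := by
    have := one_div_le_div_log hδ0 ht'
    linarith
  have hδL : 0 < δ / ℒ := by positivity
  have hδL1 : δ / ℒ ≤ δ := div_le_self hδ0.le hL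
  have hs' : 1 - δ / ℒ / 7 < β := by
    rw [div_div, mul_comm ℒ]; exact hs
  have h1 := re_LSeries_twist_le_of_zero χ ht hσ1 (by linarith) (β := β) (by linarith)
    (by linarith) hz
  have h2t : |2 * t| = 2 * |t| := by rw [abs_mul]; norm_num
  have h2 := re_LSeries_twist_le (χ ^ 2) (σ := σ) (t := 2 * t) (by rw [h2t]; linarith) (by
    refine le_trans ?_ hσ1
    rw [h2t]
    gcongr
    linarith [abs_nonneg t]) (by linarith)
  have h3 : Real.log (|2 * t| + 3) ≤ 2 * ℒ := by
    rw [hℒ, ← Real.log_rpow (by positivity)]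
    refine Real.log_le_log (by positivity) ?_
    rw [h2t]
    norm_cast
    nlinarith [abs_nonneg t]
  have h4 := three_four_one χ (show 1 < σ by linarith) t
  have h5 := hΛ σ (by linarith) (by linarith)
  have h6 : C₁ * Real.log (|2 * t| + 3) ≤ C₁ * (2 * ℒ) := by gcongr
  have h7 : σ - 1 = δ / ℒ := by ring
  rw [h7] at h5
  have h8 : 4 * (1 / (σ - β)) ≤ 3 * (1 / (δ / ℒ)) + 3 * C₀ + 6 * C₁ * ℒ := by linarith
  have h9 : 3 * C₀ ≤ 3 * C₀ * ℒ := le_mul_of_one_le_right (by positivity) hL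
  have h10 : C * ℒ ≤ 1 / 2 * (1 / (δ / ℒ)) := by
    rw [one_div_div, ← mul_div_assoc, le_div_iff₀ hδ0]
    nlinarith
  have h11 : 4 * (1 / (σ - β)) ≤ 7 / 2 * (1 / (δ / ℒ)) := by
    rw [hC] at h10; linarith
  have hpos : 0 < σ - β := by linarith
  rw [mul_one_div, mul_one_div, div_le_div_iff₀ hpos hδL] at h11
  linarith

lemma log_add_le_two_mul {t t' : ℝ} (h : |t' - t| ≤ 1) :
    Real.log (|t'| + 3) ≤ 2 * Real.log (|t| + 3) := by
  rw [← Real.log_rpow (by positivity)]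
  refine Real.log_le_log (by positivity) ?_
  have h1 : |t'| ≤ |t| + 1 := by
    have := abs_sub_abs_le_abs_sub t' t
    linarith
  norm_cast
  nlinarith [abs_nonneg t]

/-- The logarithmic derivative grows at most like `log² |t|` in a narrower region. -/
lemma exists_logDeriv_bound (k : ℕ) [NeZero k] : ∃ κ C T : ℝ, 0 < κ ∧ 0 < C ∧ 1 ≤ T ∧
    ∀ (χ : DirichletCharacter ℂ k) (s : ℂ), T ≤ |s.im| →
      1 - κ / Real.log (|s.im| + 3) ≤ s.re → s.re ≤ 1 + κ / Real.log (|s.im| + 3) →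
      regularizedL χ s ≠ 0 ∧ ‖logDeriv (regularizedL χ) s‖ ≤ C * Real.log (|s.im| + 3) ^ 2 := by
  obtain ⟨δ, hδ0, hδ1, hδ⟩ := exists_zero_free k
  have hk := log_const_nonneg k
  set κ := δ / 50 with hκ
  have hκ0 : 0 < κ := by positivity
  set A := 3 + Real.log (7 * (4 * (k : ℝ) + 7)) with hA
  have hA0 : 0 < A := by positivity
  refine ⟨κ, 6 * A / κ, max 1 (4 / κ ^ 2) + 1, hκ0, by positivity,
    by linarith [le_max_left 1 (4 / κ ^ 2)], fun χ s ht h1 h2 => ?_⟩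
  set t := s.im with ht0
  set ℒ := Real.log (|t| + 3) with hℒ
  have hL : 1 ≤ ℒ := one_le_log_abs_add_three t
  have hκL : 0 < κ / ℒ := by positivity
  have hκL1 : κ / ℒ ≤ κ := div_le_self hκ0.le hL
  have ht1 : 2 ≤ |t| := by linarith [le_max_left 1 (4 / κ ^ 2)]
  have ht2 : 4 / κ ^ 2 + 1 ≤ |t| := by linarith [le_max_right 1 (4 / κ ^ 2)]
  have ht3 : 4 / δ ^ 2 ≤ 4 / κ ^ 2 := by
    have : κ ≤ δ := by linarith
    gcongr
  set σ := 1 + κ / ℒ with hσ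
  have hσ1 : 1 + 1 / (|t| + 3) ≤ σ := by
    have := one_div_le_div_log hκ0 (t := t) (by linarith)
    linarith
  have hzf : ∀ z ∈ Metric.ball (0 : ℂ) (4 * (κ / ℒ)),
      regularizedL χ (σ + t * Complex.I + z) ≠ 0 := by
    intro z hz
    rw [mem_ball_zero_iff] at hz
    have hzre := (abs_le.1 (Complex.abs_re_le_norm z)).1
    have hzim := Complex.abs_im_le_norm z
    have him : (σ + t * Complex.I + z : ℂ).im = t + z.im := by simp
    have hd : |t + z.im - t| ≤ 1 := by rw [add_sub_cancel_left]; linarith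
    have hL2 := log_add_le_two_mul hd
    have hL3 := one_le_log_abs_add_three (t + z.im)
    have habs : |t| - 1 ≤ |t + z.im| := by
      have := abs_sub_abs_le_abs_sub t (t + z.im)
      rw [abs_sub_comm t] at this
      linarith
    refine hδ χ _ (by rw [him]; linarith) (by rw [him]; linarith) ?_
    rw [him, Complex.add_re, re_add_mul_I]
    have h3 : δ / (7 * (2 * ℒ)) ≤ δ / (7 * Real.log (|t + z.im| + 3)) := by
      gcongr
    have h4 : δ / (7 * (2 * ℒ)) = 50 / 14 * (κ / ℒ) := by
      rw [hκ]; field_simp; norm_num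
    linarith
  have hz : s - (σ + t * Complex.I) = ((s.re - σ : ℝ) : ℂ) := by
    apply Complex.ext <;> simp [ht0]
  have hzn : ‖s - (σ + t * Complex.I)‖ ≤ 4 * (κ / ℒ) / 2 := by
    rw [hz, Complex.norm_real, Real.norm_eq_abs, abs_le]
    constructor <;> linarith
  constructor
  · have := hzf (s - (σ + t * Complex.I)) (by
      rw [mem_ball_zero_iff]; linarith)
    rwa [add_sub_cancel] at this
  · have hb := norm_logDeriv_le_of_zero_free (h := fun z => regularizedL χ (σ + t * Complex.I + z))
      (r := 4 * (κ / ℒ)) (M := A * ℒ) (by positivity) (by positivity)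
      ((differentiableOn_shift χ (by linarith)).mono (Metric.ball_subset_ball (by linarith)))
      hzf (fun z hz => by
        rw [mem_ball_zero_iff] at hz
        simpa using norm_regularizedL_ratio χ (by linarith) hσ1 (by linarith) (z := z)
          (by linarith)) hzn
    have e : logDeriv (fun z => regularizedL χ (σ + t * Complex.I + z)) (s - (σ + t * Complex.I)) =
        logDeriv (regularizedL χ) s := by
      simp [logDeriv_apply, deriv_comp_const_add]
    rw [e] at hb
    refine hb.trans (le_of_eq ?_)
    field_simp
    norm_num

variable (χ : DirichletCharacter ℂ k)

lemma regularizedL_eq_LFunction (hχ : χ ≠ 1) {s : ℂ} (hs : 0 < s.re) :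
    regularizedL χ s = (s - 1) * DirichletCharacter.LFunction χ s := by
  have hopen : IsOpen {s : ℂ | 0 < s.re} := isOpen_lt continuous_const Complex.continuous_re
  have h1 : AnalyticOnNhd ℂ (regularizedL χ) {s : ℂ | 0 < s.re} :=
    DifferentiableOn.analyticOnNhd (fun s hs =>
      (differentiableAt_regularizedL χ hs).differentiableWithinAt) hopen
  have h2 : AnalyticOnNhd ℂ (fun s => (s - 1) * DirichletCharacter.LFunction χ s)
      {s : ℂ | 0 < s.re} := by
    refine DifferentiableOn.analyticOnNhd (Differentiable.differentiableOn ?_) hopen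
    have := DirichletCharacter.differentiable_LFunction hχ
    fun_prop
  refine h1.eqOn_of_preconnected_of_eventuallyEq h2
    (convex_halfSpace_re_gt 0).isPreconnected (z₀ := 2) (by simp) ?_ hs
  filter_upwards [isOpen_one_lt_re.mem_nhds (show 1 < (2 : ℂ).re by simp)] with z hz
  rw [regularizedL_eq χ hz, DirichletCharacter.LFunction_eq_LSeries χ hz]

lemma logDeriv_LFunction_eq {s : ℂ} (hs : 1 < s.re) :
    logDeriv (DirichletCharacter.LFunction χ) s = - LSeries (twist χ) s := by
  rw [LSeries_twist_eq χ hs, neg_neg, logDeriv_apply, logDeriv_apply,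
    DirichletCharacter.deriv_LFunction_eq_deriv_LSeries χ hs,
    DirichletCharacter.LFunction_eq_LSeries χ hs]

/-- The zero-free region for `L(s, χ)` with `χ` nontrivial, together with the bound for `L'/L`
there. -/
theorem exists_LFunction_logDeriv_bound (hχ : χ ≠ 1) : ∃ κ C : ℝ, 0 < κ ∧ κ ≤ 1 / 2 ∧ 0 < C ∧
    ∀ s : ℂ, 1 - κ / Real.log (|s.im| + 3) ≤ s.re → s.re ≤ 2 →
      DirichletCharacter.LFunction χ s ≠ 0 ∧
      ‖logDeriv (DirichletCharacter.LFunction χ) s‖ ≤ C * Real.log (|s.im| + 3) ^ 2 := by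
  obtain ⟨κ, C, T, hκ, hC, hT, H⟩ := exists_logDeriv_bound k
  obtain ⟨C₀, hC₀, hΛ⟩ := exists_tsum_vonMangoldt_le
  set L := DirichletCharacter.LFunction χ with hLdef
  have hLd : Differentiable ℂ L := DirichletCharacter.differentiable_LFunction hχ
  -- near the real axis: non-vanishing on `Re s = 1` and compactness
  set K : Set ℂ := Set.Icc 1 2 ×ℂ Set.Icc (-T) T with hK
  have hKc : IsCompact K := isCompact_Icc.reProdIm isCompact_Icc
  have hU : IsOpen {s | L s ≠ 0} := isOpen_ne_fun hLd.continuous continuous_const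
  have hKU : K ⊆ {s | L s ≠ 0} := by
    intro s hs
    rw [hK, Complex.mem_reProdIm] at hs
    exact DirichletCharacter.LFunction_ne_zero_of_one_le_re χ (Or.inl hχ) hs.1.1
  obtain ⟨η, hη, hηU⟩ := hKc.exists_cthickening_subset_open hU hKU
  have hK2 : ∀ s ∈ Set.Icc (1 - η) 2 ×ℂ Set.Icc (-T) T, L s ≠ 0 := by
    intro s hs
    rw [Complex.mem_reProdIm] at hs
    rcases le_total 1 s.re with h | h
    · exact hKU (Complex.mem_reProdIm.2 ⟨⟨h, hs.1.2⟩, hs.2⟩)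
    · refine hηU (Metric.mem_cthickening_of_dist_le s (1 + s.im * Complex.I) η K ?_ ?_)
      · rw [hK, Complex.mem_reProdIm]
        simpa using hs.2
      · rw [dist_eq_norm]
        have : s - (1 + s.im * Complex.I) = ((s.re - 1 : ℝ) : ℂ) := by
          apply Complex.ext <;> simp
        rw [this, Complex.norm_real, Real.norm_eq_abs, abs_le]
        constructor <;> linarith [hs.1.1]
  have hK2c : IsCompact (Set.Icc (1 - η) 2 ×ℂ Set.Icc (-T) T) :=
    isCompact_Icc.reProdIm isCompact_Icc
  have hcont : ContinuousOn (logDeriv L) (Set.Icc (1 - η) 2 ×ℂ Set.Icc (-T) T) :=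
    ContinuousOn.div (hLd.contDiff.continuous_deriv le_rfl).continuousOn hLd.continuous.continuousOn hK2
  obtain ⟨B, hB⟩ := hK2c.exists_bound_of_continuousOn hcont
  refine ⟨min (min κ η) (1 / 2), |B| + (C + 1) + (1 / κ + C₀), by positivity, min_le_right _ _,
    by positivity, fun s h1 h2 => ?_⟩
  set ℒ := Real.log (|s.im| + 3) with hℒ
  have hL : 1 ≤ ℒ := one_le_log_abs_add_three _
  have hL2 : 1 ≤ ℒ ^ 2 := one_le_pow₀ hL
  set κ' := min (min κ η) (1 / 2) with hκ'
  have hκ'0 : 0 < κ' := by positivity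
  have hκ'κ : κ' ≤ κ := (min_le_left _ _).trans (min_le_left _ _)
  have hκ'η : κ' ≤ η := (min_le_left _ _).trans (min_le_right _ _)
  have hκ'2 : κ' ≤ 1 / 2 := min_le_right _ _
  have hκ'L : κ' / ℒ ≤ κ' := div_le_self hκ'0.le hL
  have hκκ : κ' / ℒ ≤ κ / ℒ := by gcongr
  have hκC : 0 < 1 / κ := by positivity
  rcases le_total |s.im| T with ht | ht
  · have hsK : s ∈ Set.Icc (1 - η) 2 ×ℂ Set.Icc (-T) T :=
      Complex.mem_reProdIm.2 ⟨⟨by linarith, h2⟩, abs_le.1 ht⟩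
    refine ⟨hK2 s hsK, (hB s hsK).trans ?_⟩
    have := le_abs_self B
    calc B ≤ (|B| + (C + 1) + (1 / κ + C₀)) * 1 := by linarith
      _ ≤ _ := by gcongr
  · rcases le_total s.re (1 + κ / ℒ) with hre | hre
    · obtain ⟨hne, hb⟩ := H χ s ht (by linarith) hre
      have hpos : 0 < s.re := by linarith
      have hReq := regularizedL_eq_LFunction χ hχ hpos
      have hLne : L s ≠ 0 := fun h => hne (by rw [hReq, ← hLdef, h, mul_zero])
      refine ⟨hLne, ?_⟩
      have hnorm : 1 ≤ ‖s - 1‖ := by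
        have := Complex.abs_im_le_norm (s - 1)
        simp only [Complex.sub_im, Complex.one_im, sub_zero] at this
        linarith
      have hs1 : s - 1 ≠ 0 := by
        intro h; rw [h, norm_zero] at hnorm; linarith
      have hev : regularizedL χ =ᶠ[nhds s] fun s => (s - 1) * L s := by
        have hopen : IsOpen {s : ℂ | 0 < s.re} := isOpen_lt continuous_const Complex.continuous_re
        filter_upwards [hopen.mem_nhds hpos] with z hz using regularizedL_eq_LFunction χ hχ hz
      have e : logDeriv (regularizedL χ) s = 1 / (s - 1) + logDeriv L s := by
        have e1 : logDeriv (regularizedL χ) s = logDeriv (fun s => (s - 1) * L s) s := by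
          rw [logDeriv_apply, logDeriv_apply, hev.deriv_eq, hev.eq_of_nhds]
        rw [e1, logDeriv_mul (f := fun s => s - 1) s hs1 hLne (by fun_prop) hLd.differentiableAt]
        congr 1
        simp [logDeriv_apply]
      have e2 : logDeriv L s = logDeriv (regularizedL χ) s - 1 / (s - 1) := by rw [e]; ring
      have h3 : ‖1 / (s - 1)‖ ≤ 1 := by
        rw [norm_div, norm_one, div_le_one (by linarith)]; exact hnorm
      rw [e2]
      refine (norm_sub_le _ _).trans ?_
      have := abs_nonneg B
      nlinarith
    · have hκL : 0 < κ / ℒ := by positivity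
      have hs : 1 < s.re := by linarith
      refine ⟨DirichletCharacter.LFunction_ne_zero_of_one_le_re χ (Or.inl hχ) hs.le, ?_⟩
      rw [hLdef, logDeriv_LFunction_eq χ hs, norm_neg]
      refine (norm_LSeries_twist_le χ hs).trans ((hΛ s.re hs h2).trans ?_)
      have h3 : 1 / (s.re - 1) ≤ 1 / (κ / ℒ) := by
        gcongr; linarith
      have h4 : 1 / (κ / ℒ) = 1 / κ * ℒ := by field_simp
      have h5 : 1 / κ * ℒ ≤ 1 / κ * ℒ ^ 2 := by
        gcongr; nlinarith
      have := abs_nonneg B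
      nlinarith

end ZeroFreeRegion

/-! ### A smoothed Perron formula -/

section Perron

/-- The Fejér-type weight `max (1 - t) 0`, whose Mellin transform is `1 / (s (s + 1))`. -/
noncomputable def tent (t : ℝ) : ℂ := ((max (1 - t) 0 : ℝ) : ℂ)

lemma continuous_tent : Continuous tent := by unfold tent; fun_prop

lemma tent_eqOn : Set.EqOn tent (fun t => (Set.Ioc (0 : ℝ) 1).indicator (fun _ => (1 : ℂ)) t -
    (Set.Ioc (0 : ℝ) 1).indicator (fun t => (t : ℂ) ^ (1 : ℂ)) t) (Set.Ioi 0) := by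
  intro t ht
  rcases le_or_gt t 1 with h | h
  · have hm : t ∈ Set.Ioc (0 : ℝ) 1 := ⟨ht, h⟩
    simp [tent, hm, h]
  · have hm : t ∉ Set.Ioc (0 : ℝ) 1 := fun h' => absurd h'.2 (not_le.2 h)
    have : max (1 - t) 0 = 0 := max_eq_right (by linarith)
    simp [tent, hm, this]

lemma hasMellin_tent {s : ℂ} (hs : 0 < s.re) : HasMellin tent s (1 / (s * (s + 1))) := by
  have h1 := hasMellin_one_Ioc hs
  have h2 := hasMellin_cpow_Ioc 1 (s := s) (by simp; linarith)
  have h3 := hasMellin_sub h1.1 h2.1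
  rw [h1.2, h2.2] at h3
  have hs0 : s ≠ 0 := by rintro rfl; simp at hs
  have hs1 : s + 1 ≠ 0 := by
    intro h
    have := congrArg Complex.re h
    simp at this; linarith
  have e : 1 / s - 1 / (s + 1) = 1 / (s * (s + 1)) := by field_simp; ring
  rw [e] at h3
  refine ⟨?_, ?_⟩
  · refine (h3.1.congr_fun ?_ measurableSet_Ioi)
    intro t ht
    simp only [tent_eqOn ht]
  · rw [← h3.2, mellin, mellin]
    refine MeasureTheory.setIntegral_congr_fun measurableSet_Ioi ?_
    intro t ht
    simp only [tent_eqOn ht]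

lemma norm_kernel_le {c y : ℝ} (hc : 1 / 2 ≤ c) :
    ‖(1 / ((c + y * Complex.I) * ((c + y * Complex.I) + 1)) : ℂ)‖ ≤ 4 * (1 + y ^ 2)⁻¹ := by
  have h1 : ‖(c + y * Complex.I : ℂ)‖ ^ 2 = c ^ 2 + y ^ 2 := by
    rw [Complex.sq_norm, Complex.normSq_add_mul_I]
  have h2 : ‖(c + y * Complex.I : ℂ)‖ ≤ ‖(c + y * Complex.I + 1 : ℂ)‖ := by
    refine le_of_sq_le_sq ?_ (norm_nonneg _)
    rw [h1, show (c + y * Complex.I + 1 : ℂ) = ((c + 1 : ℝ) : ℂ) + y * Complex.I by push_cast; ring,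
      Complex.sq_norm, Complex.normSq_add_mul_I]
    nlinarith
  have h0 : 0 < 1 + y ^ 2 := by positivity
  rw [norm_div, norm_one, norm_mul, ← div_eq_mul_inv]
  have h3 : (1 + y ^ 2) / 4 ≤ ‖(c + y * Complex.I : ℂ)‖ * ‖(c + y * Complex.I + 1 : ℂ)‖ := by
    calc (1 + y ^ 2) / 4 ≤ ‖(c + y * Complex.I : ℂ)‖ ^ 2 := by rw [h1]; nlinarith
      _ = ‖(c + y * Complex.I : ℂ)‖ * ‖(c + y * Complex.I : ℂ)‖ := sq _
      _ ≤ _ := by gcongr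
  rw [div_le_div_iff₀ (by linarith) h0]
  linarith

lemma continuous_kernel {c : ℝ} (hc : 1 / 2 ≤ c) :
    Continuous fun y : ℝ => (1 / ((c + y * Complex.I) * ((c + y * Complex.I) + 1)) : ℂ) := by
  refine Continuous.div continuous_const (by fun_prop) fun y h => ?_
  rcases mul_eq_zero.1 h with h | h <;>
  · have := congrArg Complex.re h
    simp at this; linarith

lemma integrable_kernel {c : ℝ} (hc : 1 / 2 ≤ c) : MeasureTheory.Integrable
    fun y : ℝ => (1 / ((c + y * Complex.I) * ((c + y * Complex.I) + 1)) : ℂ) :=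
  (integrable_inv_one_add_sq.const_mul 4).mono' (continuous_kernel hc).aestronglyMeasurable
    (Filter.Eventually.of_forall fun _ => norm_kernel_le hc)

lemma tent_eq_integral {c x : ℝ} (hc : 1 / 2 ≤ c) (hx : 0 < x) :
    tent x = (1 / (2 * Real.pi) : ℝ) • ∫ y : ℝ, (x : ℂ) ^ (-(c + y * Complex.I)) *
      (1 / ((c + y * Complex.I) * ((c + y * Complex.I) + 1))) := by
  have hm : ∀ y : ℝ, mellin tent (c + y * Complex.I) =
      1 / ((c + y * Complex.I) * ((c + y * Complex.I) + 1)) := fun y =>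
    (hasMellin_tent (by rw [re_add_mul_I]; linarith)).2
  have := mellinInv_mellin_eq c tent hx (hasMellin_tent (by simp; linarith)).1
    ((integrable_kernel hc).congr (Filter.Eventually.of_forall fun y => (hm y).symm))
    continuous_tent.continuousAt
  rw [← this, mellinInv]
  simp only [hm, smul_eq_mul]

/-- The integrand of the smoothed Perron formula for the Dirichlet series `D`. -/
noncomputable def perronIntegrand (D : ℂ → ℂ) (x : ℝ) (s : ℂ) : ℂ :=
  (x : ℂ) ^ s * D s * (1 / (s * (s + 1)))

lemma perron {a : ℕ → ℂ} {c x : ℝ} (ha : a 0 = 0) (hc : 1 / 2 ≤ c) (hx : 0 < x)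
    (hs : LSeriesSummable a c) :
    ∑ n ∈ range (⌊x⌋₊ + 1), a n * tent (n / x) =
      (1 / (2 * Real.pi) : ℝ) • ∫ y : ℝ, perronIntegrand (LSeries a) x (c + y * Complex.I) := by
  set K : ℝ → ℂ := fun y => 1 / ((c + y * Complex.I) * ((c + y * Complex.I) + 1)) with hK
  set F : ℕ → ℝ → ℂ := fun n y => (x : ℂ) ^ (c + y * Complex.I) *
    LSeries.term a (c + y * Complex.I) n * K y with hF
  have hx0 : (x : ℂ) ≠ 0 := by exact_mod_cast hx.ne'
  have hKi : MeasureTheory.Integrable K := integrable_kernel hc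
  have hnorm : ∀ n y, ‖F n y‖ = x ^ c * ‖LSeries.term a c n‖ * ‖K y‖ := by
    intro n y
    rw [hF]
    simp only [norm_mul]
    rw [Complex.norm_cpow_eq_rpow_re_of_pos hx, re_add_mul_I]
    congr 2
    rw [LSeries.norm_term_eq, LSeries.norm_term_eq]
    simp
  have hFeq : ∀ n : ℕ, n ≠ 0 → ∀ y, F n y = a n * (((n / x : ℝ) : ℂ) ^ (-(c + y * Complex.I)) * K y) := by
    intro n hn y
    have hn0 : (n : ℂ) ≠ 0 := by exact_mod_cast hn
    have e : (((n / x : ℝ) : ℂ) ^ (-(c + y * Complex.I))) =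
        (x : ℂ) ^ (c + y * Complex.I) / (n : ℂ) ^ (c + y * Complex.I) := by
      rw [Complex.cpow_neg, ← Complex.inv_cpow, ← Complex.ofReal_inv, inv_div, Complex.ofReal_div,
        Complex.ofReal_natCast, div_eq_mul_inv, ← Complex.ofReal_natCast, ← Complex.ofReal_inv,
        Complex.mul_cpow_ofReal_nonneg hx.le (by positivity), Complex.ofReal_inv, Complex.inv_cpow]
      · rfl
      · rw [Complex.arg_ofReal_of_nonneg (by positivity)]; exact Real.pi_pos.ne
      · rw [Complex.arg_ofReal_of_nonneg (by positivity)]; exact Real.pi_pos.ne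
    rw [hF]
    simp only [LSeries.term_of_ne_zero hn, e]
    ring
  have hF0 : ∀ y, F 0 y = 0 := by intro y; simp [hF]
  have hcont : ∀ n, Continuous (F n) := by
    intro n
    rcases eq_or_ne n 0 with rfl | hn
    · have : F 0 = 0 := funext hF0
      rw [this]; exact continuous_zero
    · rw [hF]
      simp only [LSeries.term_of_ne_zero hn]
      have hn0 : (n : ℂ) ≠ 0 := by exact_mod_cast hn
      have h1 : Continuous fun y : ℝ => (x : ℂ) ^ (c + y * Complex.I) := by
        refine Continuous.const_cpow (by fun_prop) (Or.inl hx0)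
      have h2 : Continuous fun y : ℝ => (n : ℂ) ^ (c + y * Complex.I) := by
        refine Continuous.const_cpow (by fun_prop) (Or.inl hn0)
      refine (h1.mul (continuous_const.div h2 fun y => ?_)).mul (continuous_kernel hc)
      rw [Complex.cpow_def_of_ne_zero hn0]
      exact Complex.exp_ne_zero _
  have hIntegr : ∀ n, MeasureTheory.Integrable (F n) := by
    intro n
    refine (hKi.norm.const_mul (x ^ c * ‖LSeries.term a c n‖)).mono'
      (hcont n).aestronglyMeasurable (Filter.Eventually.of_forall fun y => ?_)
    rw [hnorm]
  have hsum : Summable fun n => ∫ y, ‖F n y‖ := by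
    simp only [hnorm, MeasureTheory.integral_const_mul]
    exact (hs.norm.mul_left _).mul_right _
  have H := MeasureTheory.hasSum_integral_of_summable_integral_norm hIntegr hsum
  have hI : ∀ n, ∫ y, F n y = (2 * Real.pi : ℝ) • (a n * tent (n / x)) := by
    intro n
    rcases eq_or_ne n 0 with rfl | hn
    · simp [hF0, ha]
    · simp only [hFeq n hn, MeasureTheory.integral_const_mul]
      rw [tent_eq_integral hc (show 0 < (n / x : ℝ) by positivity), mul_smul_comm, smul_smul]
      rw [mul_one_div_cancel (by positivity), one_smul]
  have hT : ∀ y, ∑' n, F n y = perronIntegrand (LSeries a) x (c + y * Complex.I) := by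
    intro y
    rw [hF, perronIntegrand, LSeries]
    simp only
    rw [tsum_mul_right, tsum_mul_left]
  have hfin : ∑' n, ∫ y, F n y = ∑ n ∈ range (⌊x⌋₊ + 1), ∫ y, F n y := by
    refine tsum_eq_sum fun n hn => ?_
    have hn' : x < n := by
      rw [mem_range, not_lt] at hn
      exact (Nat.floor_lt hx.le).1 hn
    have : max (1 - n / x) 0 = 0 := max_eq_right (by
      rw [sub_nonpos, one_le_div hx]; exact hn'.le)
    rw [hI, tent, this]
    simp
  simp only [hT] at H
  rw [← H.tsum_eq, hfin]
  simp only [hI]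
  rw [← smul_sum, smul_smul, one_div_mul_cancel (by positivity), one_smul]

end Perron

section Shift

lemma arctan_tail_le {T : ℝ} (hT : 0 < T) : Real.pi / 2 - Real.arctan T ≤ 1 / T := by
  have h0 : 0 < T⁻¹ := by positivity
  have := Real.lt_tan (Real.arctan_pos.2 h0) (Real.arctan_lt_pi_div_two _)
  rw [Real.tan_arctan, Real.arctan_inv_of_pos hT] at this
  rw [one_div]; exact this.le

lemma norm_perronIntegrand_le {D : ℂ → ℂ} {x c y B : ℝ} (hx : 0 < x) (hc : 1 / 2 ≤ c)
    (hB : ‖D (c + y * Complex.I)‖ ≤ B) :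
    ‖perronIntegrand D x (c + y * Complex.I)‖ ≤ 4 * x ^ c * B * (1 + y ^ 2)⁻¹ := by
  rw [perronIntegrand, norm_mul, norm_mul, Complex.norm_cpow_eq_rpow_re_of_pos hx, re_add_mul_I]
  calc _ ≤ x ^ c * B * (4 * (1 + y ^ 2)⁻¹) := by
        have := norm_kernel_le (c := c) (y := y) hc
        have := (norm_nonneg _).trans hB
        gcongr
    _ = _ := by ring

/-- Moving the line of integration from `Re s = c` to `Re s = b` for `|Im s| ≤ T`. -/
lemma norm_integral_perron_le {D : ℂ → ℂ} {x b c T B B' : ℝ} (hx : 1 ≤ x) (hb : 1 / 2 ≤ b)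
    (hbc : b ≤ c) (hc : c ≤ 2) (hT : 1 ≤ T)
    (hD : DifferentiableOn ℂ D (Set.Icc b c ×ℂ Set.Icc (-T) T))
    (hDB : ∀ s ∈ Set.Icc b c ×ℂ Set.Icc (-T) T, ‖D s‖ ≤ B)
    (hDc : Continuous fun y : ℝ => D (c + y * Complex.I))
    (hDB' : ∀ y : ℝ, ‖D (c + y * Complex.I)‖ ≤ B') :
    ‖∫ y : ℝ, perronIntegrand D x (c + y * Complex.I)‖ ≤
      8 * x ^ c * B' / T + 12 * x ^ c * B / T + 16 * x ^ b * B := by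
  set G := perronIntegrand D x with hG
  have hx0 : 0 < x := by linarith
  have hxC : (x : ℂ) ≠ 0 := by exact_mod_cast hx0.ne'
  have hB' : 0 ≤ B' := (norm_nonneg _).trans (hDB' 0)
  have hB : 0 ≤ B := (norm_nonneg _).trans (hDB (b : ℂ) (Complex.mem_reProdIm.2
    ⟨by simpa using hbc, by simp; linarith⟩))
  have hT2 : (1 + T ^ 2)⁻¹ ≤ 1 / T := by
    rw [← one_div]
    gcongr
    nlinarith
  -- integrability on the line `Re s = c`
  have hcont : Continuous fun y : ℝ => G (c + y * Complex.I) := by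
    have h1 : Continuous fun y : ℝ => (x : ℂ) ^ (c + y * Complex.I) :=
      Continuous.const_cpow (by fun_prop) (Or.inl hxC)
    exact (h1.mul hDc).mul (continuous_kernel (by linarith))
  have hbd : ∀ y : ℝ, ‖G (c + y * Complex.I)‖ ≤ 4 * x ^ c * B' * (1 + y ^ 2)⁻¹ := fun y =>
    norm_perronIntegrand_le hx0 (by linarith) (hDB' y)
  have hgi : MeasureTheory.Integrable fun y : ℝ => 4 * x ^ c * B' * (1 + y ^ 2)⁻¹ :=
    integrable_inv_one_add_sq.const_mul _
  have hIntegr : MeasureTheory.Integrable fun y : ℝ => G (c + y * Complex.I) :=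
    hgi.mono' hcont.aestronglyMeasurable (Filter.Eventually.of_forall hbd)
  have hsplit : ∫ y : ℝ, G (c + y * Complex.I) = (∫ y in Set.Iic (-T), G (c + y * Complex.I)) +
      ((∫ y in (-T)..T, G (c + y * Complex.I)) + ∫ y in Set.Ioi T, G (c + y * Complex.I)) := by
    rw [intervalIntegral.integral_interval_add_Ioi hIntegr.integrableOn hIntegr.integrableOn,
      intervalIntegral.integral_Iic_add_Ioi hIntegr.integrableOn hIntegr.integrableOn]
  have htail1 : ‖∫ y in Set.Ioi T, G (c + y * Complex.I)‖ ≤ 4 * x ^ c * B' * (1 / T) := by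
    refine (MeasureTheory.norm_integral_le_of_norm_le hgi.integrableOn
      (Filter.Eventually.of_forall hbd)).trans ?_
    rw [MeasureTheory.integral_const_mul, integral_Ioi_inv_one_add_sq]
    have := arctan_tail_le (show 0 < T by linarith)
    gcongr
  have htail2 : ‖∫ y in Set.Iic (-T), G (c + y * Complex.I)‖ ≤ 4 * x ^ c * B' * (1 / T) := by
    refine (MeasureTheory.norm_integral_le_of_norm_le hgi.integrableOn
      (Filter.Eventually.of_forall hbd)).trans ?_
    rw [MeasureTheory.integral_const_mul, integral_Iic_inv_one_add_sq, Real.arctan_neg]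
    have := arctan_tail_le (show 0 < T by linarith)
    gcongr
    linarith
  -- Cauchy's theorem on the rectangle
  have hGd : DifferentiableOn ℂ G (Set.Icc b c ×ℂ Set.Icc (-T) T) := by
    have h1 : DifferentiableOn ℂ (fun s : ℂ => (x : ℂ) ^ s) (Set.Icc b c ×ℂ Set.Icc (-T) T) :=
      fun s _ => (differentiableAt_id.const_cpow (Or.inl hxC)).differentiableWithinAt
    have h2 : DifferentiableOn ℂ (fun s : ℂ => 1 / (s * (s + 1)))
        (Set.Icc b c ×ℂ Set.Icc (-T) T) := by
      refine DifferentiableOn.div (by fun_prop) (by fun_prop) fun s hs h => ?_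
      have hs1 := (Complex.mem_reProdIm.1 hs).1.1
      rcases mul_eq_zero.1 h with h | h <;>
      · have := congrArg Complex.re h
        simp at this; linarith
    exact (h1.mul hD).mul h2
  have hrect := Complex.integral_boundary_rect_eq_zero_of_differentiableOn G
    (b + (-T : ℝ) * Complex.I) (c + T * Complex.I) (by
      simp only [re_add_mul_I, Complex.add_im, Complex.ofReal_im, Complex.mul_im, Complex.ofReal_re,
        Complex.I_im, Complex.I_re, mul_one, mul_zero, add_zero, zero_add]
      rwa [Set.uIcc_of_le hbc, Set.uIcc_of_le (by linarith)])
  simp only [re_add_mul_I, Complex.add_im, Complex.ofReal_im, Complex.mul_im, Complex.ofReal_re,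
        Complex.I_im, Complex.I_re, mul_one, mul_zero, add_zero, zero_add, smul_eq_mul] at hrect
  have hmem : ∀ u ∈ Set.Icc b c, ∀ y ∈ Set.Icc (-T) T, ‖D (u + y * Complex.I)‖ ≤ B := by
    intro u hu y hy
    refine hDB _ (Complex.mem_reProdIm.2 ⟨by simpa using hu, by simpa using hy⟩)
  have hhor : ∀ y : ℝ, y ^ 2 = T ^ 2 → y ∈ Set.Icc (-T) T →
      ‖∫ u in b..c, G (u + y * Complex.I)‖ ≤ 6 * x ^ c * B * (1 / T) := by
    intro y hy hy'
    have := intervalIntegral.norm_integral_le_of_norm_le_const (a := b) (b := c)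
      (f := fun u : ℝ => G (u + y * Complex.I)) (C := 4 * x ^ c * B * (1 / T)) (by
        intro u hu
        rw [Set.uIoc_of_le hbc] at hu
        refine (norm_perronIntegrand_le hx0 (by linarith [hu.1])
          (hmem u ⟨hu.1.le, hu.2⟩ y hy')).trans ?_
        rw [hy]
        have : x ^ u ≤ x ^ c := Real.rpow_le_rpow_of_exponent_le hx hu.2
        gcongr)
    refine this.trans ?_
    rw [abs_of_nonneg (by linarith)]
    have h1 : 0 ≤ 4 * x ^ c * B * (1 / T) := by positivity
    nlinarith
  have hh1 := hhor (-T) (by ring) ⟨le_rfl, by linarith⟩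
  have hh2 := hhor T rfl ⟨by linarith, le_rfl⟩
  have hleft : ‖∫ y in (-T)..T, G (b + y * Complex.I)‖ ≤ 16 * x ^ b * B := by
    have hgi' : MeasureTheory.Integrable fun y : ℝ => 4 * x ^ b * B * (1 + y ^ 2)⁻¹ :=
      integrable_inv_one_add_sq.const_mul _
    rw [intervalIntegral.integral_of_le (by linarith)]
    calc _ ≤ ∫ y in Set.Ioc (-T) T, 4 * x ^ b * B * (1 + y ^ 2)⁻¹ := by
          refine MeasureTheory.norm_integral_le_of_norm_le hgi'.integrableOn ?_
          filter_upwards [MeasureTheory.ae_restrict_mem measurableSet_Ioc] with y hy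
          exact norm_perronIntegrand_le hx0 hb
            (hmem b ⟨le_rfl, hbc⟩ y ⟨hy.1.le, hy.2⟩)
      _ ≤ ∫ y, 4 * x ^ b * B * (1 + y ^ 2)⁻¹ :=
          MeasureTheory.setIntegral_le_integral hgi'
            (Filter.Eventually.of_forall fun y => by positivity)
      _ = 4 * x ^ b * B * Real.pi := by
          rw [MeasureTheory.integral_const_mul, integral_univ_inv_one_add_sq]
      _ ≤ 4 * x ^ b * B * 4 := by gcongr; exact Real.pi_le_four
      _ = _ := by ring
  have hmid : ‖∫ y in (-T)..T, G (c + y * Complex.I)‖ ≤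
      12 * x ^ c * B * (1 / T) + 16 * x ^ b * B := by
    have e : ‖Complex.I * ∫ y in (-T)..T, G (c + y * Complex.I)‖ =
        ‖∫ y in (-T)..T, G (c + y * Complex.I)‖ := by
      rw [norm_mul, Complex.norm_I, one_mul]
    have e2 : ‖Complex.I * ∫ y in (-T)..T, G (b + y * Complex.I)‖ =
        ‖∫ y in (-T)..T, G (b + y * Complex.I)‖ := by
      rw [norm_mul, Complex.norm_I, one_mul]
    have e3 : Complex.I * ∫ y in (-T)..T, G (c + y * Complex.I) =
        Complex.I * (∫ y in (-T)..T, G (b + y * Complex.I)) +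
        (∫ u in b..c, G (u + T * Complex.I)) - ∫ u in b..c, G (u + (-T : ℝ) * Complex.I) := by
      linear_combination hrect
    rw [← e, e3]
    refine (norm_sub_le _ _).trans ?_
    have := norm_add_le (Complex.I * (∫ y in (-T)..T, G (b + y * Complex.I)))
      (∫ u in b..c, G (u + T * Complex.I))
    linarith
  rw [hsplit]
  refine (norm_add_le _ _).trans ?_
  have := norm_add_le (∫ y in (-T)..T, G (c + y * Complex.I))
    (∫ y in Set.Ioi T, G (c + y * Complex.I))
  have e1 : 8 * x ^ c * B' / T = 2 * (4 * x ^ c * B' * (1 / T)) := by ring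
  have e2 : 12 * x ^ c * B / T = 12 * x ^ c * B * (1 / T) := by ring
  linarith

end Shift

/-! ### The prime number theorem for a nontrivial character -/

section PsiBound

variable {k : ℕ} [NeZero k] (χ : DirichletCharacter ℂ k)

set_option linter.unusedSectionVars false

lemma sq_le_exp {a u : ℝ} (ha : 0 < a) (hu : 0 ≤ u) : u ^ 2 ≤ 2 / a ^ 2 * Real.exp (a * u) := by
  have := Real.quadratic_le_exp_of_nonneg (show 0 ≤ a * u by positivity)
  have h1 : (a * u) ^ 2 / 2 ≤ Real.exp (a * u) := by
    have : 0 ≤ a * u := by positivity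
    linarith
  rw [div_mul_eq_mul_div, le_div_iff₀ (by positivity)]
  nlinarith

/-- The first Cesàro mean of `χ(n) Λ(n)`, by moving the contour to the edge of the zero-free region
up to height `exp √(log x)`. -/
lemma exists_smoothed_bound (hχ : χ ≠ 1) : ∃ A c₀ : ℝ, 0 < A ∧ 0 < c₀ ∧ c₀ ≤ 1 ∧
    ∀ x : ℝ, Real.exp 1 ≤ x →
      ‖∑ n ∈ range (⌊x⌋₊ + 1), twist χ n * tent (n / x)‖ ≤
        A * x * Real.exp (-c₀ * √(Real.log x)) := by
  obtain ⟨κ, C, hκ, hκ2, hC, H⟩ := exists_LFunction_logDeriv_bound χ hχ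
  obtain ⟨C₀, hC₀, hΛ⟩ := exists_tsum_vonMangoldt_le
  set L := DirichletCharacter.LFunction χ with hLdef
  have hLd : Differentiable ℂ L := DirichletCharacter.differentiable_LFunction hχ
  refine ⟨(24 * (1 + C₀) + 468 * C) * (2 / (κ / 6) ^ 2), κ / 6, by positivity, by positivity,
    by linarith, fun x hx => ?_⟩
  have hx1 : 1 ≤ x := (Real.one_le_exp zero_le_one).trans hx
  have hx0 : 0 < x := by linarith
  have hlog1 : 1 ≤ Real.log x := by rwa [Real.le_log_iff_exp_le hx0]
  set u := √(Real.log x) with hu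
  have hu1 : 1 ≤ u := by rw [hu]; exact Real.one_le_sqrt.2 hlog1
  have hu2 : u ^ 2 = Real.log x := Real.sq_sqrt (by linarith)
  have hxe : x = Real.exp (u ^ 2) := by rw [hu2, Real.exp_log hx0]
  set T := Real.exp u with hT
  have hT1 : 1 ≤ T := Real.one_le_exp (by linarith)
  set ℓ := Real.log (T + 3) with hℓ
  have hℓ1 : 1 ≤ ℓ := by
    have := one_le_log_abs_add_three T
    rwa [abs_of_nonneg (by linarith)] at this
  have hℓ3 : ℓ ≤ 3 * u := by
    rw [hℓ, Real.log_le_iff_le_exp (by linarith)]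
    have h1 : Real.exp (3 * u) = T * T ^ 2 := by
      rw [hT, ← Real.exp_nat_mul, ← Real.exp_add]; congr 1; push_cast; ring
    have h2 : 2 ≤ T := by
      have := Real.add_one_le_exp u; linarith
    rw [h1]
    nlinarith [mul_nonneg (sub_nonneg.2 h2) (sub_nonneg.2 h2)]
  set c := 1 + 1 / u ^ 2 with hc
  have hu21 : 1 ≤ u ^ 2 := one_le_pow₀ hu1
  have hcinv : 1 / u ^ 2 ≤ 1 := by rw [div_le_one (by linarith)]; exact hu21
  have hcinv0 : 0 < 1 / u ^ 2 := by positivity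
  set b := 1 - κ / ℓ with hb
  have hκℓ : κ / ℓ ≤ κ := div_le_self hκ.le hℓ1
  have hκℓ0 : 0 < κ / ℓ := by positivity
  -- on the rectangle we stay inside the zero-free region
  have hrect : ∀ s ∈ Set.Icc b c ×ℂ Set.Icc (-T) T, L s ≠ 0 ∧ ‖logDeriv L s‖ ≤ C * ℓ ^ 2 := by
    intro s hs
    obtain ⟨h1, h2⟩ := Complex.mem_reProdIm.1 hs
    have h3 : |s.im| ≤ T := abs_le.2 h2
    have h4 := one_le_log_abs_add_three s.im
    have h5 : Real.log (|s.im| + 3) ≤ ℓ := by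
      rw [hℓ]; gcongr
    have h6 : κ / ℓ ≤ κ / Real.log (|s.im| + 3) := by gcongr
    obtain ⟨h7, h8⟩ := H s (by linarith [h1.1]) (by linarith [h1.2])
    exact ⟨h7, h8.trans (by gcongr)⟩
  have hre : ∀ y : ℝ, 1 < (c + y * Complex.I : ℂ).re := fun y => by rw [re_add_mul_I]; linarith
  have hDL : ∀ y : ℝ, -logDeriv L (c + y * Complex.I) = LSeries (twist χ) (c + y * Complex.I) :=
    fun y => by rw [hLdef, logDeriv_LFunction_eq χ (hre y), neg_neg]
  have hLc : Continuous L := hLd.continuous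
  have hdc : Continuous (deriv L) := hLd.contDiff.continuous_deriv le_rfl
  have hmain := norm_integral_perron_le (D := fun s => -logDeriv L s) (x := x) (b := b) (c := c)
    (T := T) (B := C * ℓ ^ 2) (B' := u ^ 2 + C₀) hx1 (by linarith) (by linarith) (by linarith) hT1
    (by
      intro s hs
      refine DifferentiableAt.differentiableWithinAt ?_
      have hd2 : Differentiable ℂ (deriv L) :=
        (hLd.contDiff (n := 2)).differentiable_deriv_two
      exact ((hd2 s).div (hLd s) (hrect s hs).1).neg)
    (fun s hs => by rw [norm_neg]; exact (hrect s hs).2)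
    (by
      refine Continuous.neg (Continuous.div (hdc.comp (by fun_prop)) (hLc.comp (by fun_prop)) fun y => ?_)
      exact DirichletCharacter.LFunction_ne_zero_of_one_le_re χ (Or.inl hχ) (hre y).le)
    (fun y => by
      simp only [hDL]
      refine (norm_LSeries_twist_le χ (hre y)).trans ?_
      rw [re_add_mul_I]
      refine (hΛ c (by linarith) (by linarith)).trans (le_of_eq ?_)
      rw [hc, add_sub_cancel_left, one_div_one_div])
  have hper : ∀ y : ℝ, perronIntegrand (LSeries (twist χ)) x (c + y * Complex.I) =
      perronIntegrand (fun s => -logDeriv L s) x (c + y * Complex.I) := by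
    intro y
    simp only [perronIntegrand, hDL]
  rw [perron (a := twist χ) (c := c) (by simp [twist]) (by linarith) hx0
    (LSeriesSummable_twist χ (by simp; linarith))]
  simp only [hper]
  rw [norm_smul, Real.norm_of_nonneg (by positivity)]
  have hpi : 1 / (2 * Real.pi) ≤ 1 := by
    rw [div_le_one (by positivity)]
    linarith [Real.pi_gt_three]
  refine (mul_le_of_le_one_left (norm_nonneg _) hpi).trans (hmain.trans ?_)
  have hxc : x ^ c = Real.exp 1 * x := by
    rw [hc, Real.rpow_add hx0, Real.rpow_one, mul_comm]
    congr 1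
    rw [Real.rpow_def_of_pos hx0, ← hu2, mul_one_div_cancel (by positivity)]
  have he3 : Real.exp 1 ≤ 3 := by linarith [Real.exp_one_lt_d9]
  set E := Real.exp (-(κ / 3) * u) with hE
  have hxb : x ^ b ≤ x * E := by
    rw [hb, Real.rpow_sub hx0, Real.rpow_one, div_eq_mul_inv, ← Real.rpow_neg hx0.le,
      Real.rpow_def_of_pos hx0, ← hu2]
    refine mul_le_mul_of_nonneg_left (Real.exp_le_exp.2 ?_) hx0.le
    have : κ / (3 * u) ≤ κ / ℓ := by gcongr
    have h2 : u ^ 2 * (κ / (3 * u)) = κ / 3 * u := by field_simp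
    nlinarith
  have hTE : 1 / T ≤ E := by
    rw [hT, one_div, ← Real.exp_neg, hE]
    gcongr
    nlinarith
  have hℓ2 : ℓ ^ 2 ≤ 9 * u ^ 2 := by nlinarith
  have hE0 : 0 < E := Real.exp_pos _
  have hfin : u ^ 2 * E ≤ 2 / (κ / 6) ^ 2 * Real.exp (-(κ / 6) * u) := by
    have h1 := sq_le_exp (show 0 < κ / 6 by positivity) (show 0 ≤ u by linarith)
    calc u ^ 2 * E ≤ (2 / (κ / 6) ^ 2 * Real.exp (κ / 6 * u)) * E := by gcongr
      _ = _ := by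
        rw [mul_assoc, hE, ← Real.exp_add]; congr 2; ring
  calc 8 * x ^ c * (u ^ 2 + C₀) / T + 12 * x ^ c * (C * ℓ ^ 2) / T + 16 * x ^ b * (C * ℓ ^ 2)
      = 8 * x ^ c * (u ^ 2 + C₀) * (1 / T) + 12 * x ^ c * (C * ℓ ^ 2) * (1 / T)
        + 16 * x ^ b * (C * ℓ ^ 2) := by ring
    _ ≤ 8 * (3 * x) * (u ^ 2 + C₀ * u ^ 2) * E + 12 * (3 * x) * (C * (9 * u ^ 2)) * E
        + 16 * (x * E) * (C * (9 * u ^ 2)) := by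
        rw [hxc]
        have h1 : C₀ ≤ C₀ * u ^ 2 := le_mul_of_one_le_right hC₀.le hu21
        gcongr
    _ = (24 * (1 + C₀) + 468 * C) * x * (u ^ 2 * E) := by ring
    _ ≤ (24 * (1 + C₀) + 468 * C) * x * (2 / (κ / 6) ^ 2 * Real.exp (-(κ / 6) * u)) := by
        gcongr
    _ = _ := by ring

lemma mul_tent {x t : ℝ} (hx : 0 < x) : (x : ℂ) * tent (t / x) = ((max (x - t) 0 : ℝ) : ℂ) := by
  rw [tent, ← Complex.ofReal_mul]
  congr 1
  rw [mul_max_of_nonneg _ _ hx.le, mul_zero, mul_sub, mul_one, mul_div_cancel₀ _ hx.ne']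

lemma mul_sum_tent (a : ℕ → ℂ) {x : ℝ} (hx : 0 < x) {M : ℕ} (hM : ⌊x⌋₊ ≤ M) :
    (x : ℂ) * ∑ n ∈ range (⌊x⌋₊ + 1), a n * tent (n / x) =
      ∑ n ∈ range (M + 1), a n * ((max (x - n) 0 : ℝ) : ℂ) := by
  rw [mul_sum]
  have : ∀ n ∈ range (⌊x⌋₊ + 1), (x : ℂ) * (a n * tent (n / x)) =
      a n * ((max (x - n) 0 : ℝ) : ℂ) := fun n _ => by rw [mul_left_comm, mul_tent hx]
  rw [sum_congr rfl this]
  refine sum_subset (range_mono (by omega)) fun n _ hn => ?_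
  have hn' : x < n := by
    rw [mem_range, not_lt] at hn
    exact (Nat.floor_lt hx.le).1 hn
  rw [max_eq_right (by linarith)]
  simp

lemma norm_twist_le (n : ℕ) : ‖twist χ n‖ ≤ Real.log n := by
  rw [twist, norm_mul, Complex.norm_real, Real.norm_of_nonneg ArithmeticFunction.vonMangoldt_nonneg]
  exact (mul_le_of_le_one_left ArithmeticFunction.vonMangoldt_nonneg (χ.norm_le_one _)).trans
    ArithmeticFunction.vonMangoldt_le_log

/-- The prime number theorem for a nontrivial character, `ψ(x, χ) ≪ x exp (-c √(log x))`. The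
smoothing is removed by comparing the Cesàro sums at `x` and `x + h` with
`h = x exp (-c √(log x))`. -/
lemma exists_psi_bound (hχ : χ ≠ 1) : ∃ A c₀ : ℝ, 0 < A ∧ 0 < c₀ ∧ c₀ ≤ 1 ∧
    ∀ x : ℝ, Real.exp 1 ≤ x →
      ‖∑ n ∈ range (⌊x⌋₊ + 1), twist χ n‖ ≤ A * x * Real.exp (-c₀ * √(Real.log x)) := by
  obtain ⟨A, c₀, hA, hc₀, hc₀1, H⟩ := exists_smoothed_bound χ hχ
  refine ⟨5 * A + 4 * (2 / (c₀ / 4) ^ 2), c₀ / 4, by positivity, by positivity, by linarith,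
    fun x hx => ?_⟩
  have hx1 : 1 ≤ x := (Real.one_le_exp zero_le_one).trans hx
  have hx0 : 0 < x := by linarith
  have hlog1 : 1 ≤ Real.log x := by rwa [Real.le_log_iff_exp_le hx0]
  set u := √(Real.log x) with hu
  have hu1 : 1 ≤ u := by rw [hu]; exact Real.one_le_sqrt.2 hlog1
  have hu2 : u ^ 2 = Real.log x := Real.sq_sqrt (by linarith)
  have hxe : x = Real.exp (u ^ 2) := by rw [hu2, Real.exp_log hx0]
  set E := Real.exp (-(c₀ / 2) * u) with hE
  have hE0 : 0 < E := Real.exp_pos _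
  have hE1 : E ≤ 1 := Real.exp_le_one_iff.2 (by nlinarith)
  have hEE : Real.exp (-c₀ * u) = E * E := by rw [hE, ← Real.exp_add]; congr 1; ring
  set h := x * E with hh
  have hh0 : 0 < h := by positivity
  have hh1 : 1 ≤ h := by
    rw [hh, hxe, hE, ← Real.exp_add]
    exact Real.one_le_exp (by nlinarith)
  have hhx : h ≤ x := mul_le_of_le_one_right hx0.le hE1
  set y := x + h with hy
  have hy0 : 0 < y := by positivity
  have hHx := H x hx
  have hHy := H y (by linarith)
  have hyu : Real.exp (-c₀ * √(Real.log y)) ≤ E * E := by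
    rw [← hEE]
    have : u ≤ √(Real.log y) := Real.sqrt_le_sqrt (Real.log_le_log hx0 (by linarith))
    exact Real.exp_le_exp.2 (by nlinarith)
  set N := ⌊x⌋₊ with hN
  set M := ⌊y⌋₊ with hM
  have hNM : N ≤ M := Nat.floor_le_floor (by linarith)
  have e1 := mul_sum_tent (twist χ) hx0 hNM
  have e2 := mul_sum_tent (twist χ) hy0 (le_refl M)
  have hlogy : Real.log y ≤ 2 * u ^ 2 := by
    calc Real.log y ≤ Real.log (x ^ 2) := by
          refine Real.log_le_log hy0 ?_
          have : 2 ≤ x := by linarith [Real.exp_one_gt_d9]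
          nlinarith
      _ = 2 * u ^ 2 := by rw [Real.log_pow, hu2]; norm_num
  have key : ‖(h : ℂ) * ∑ n ∈ range (N + 1), twist χ n - (∑ n ∈ range (M + 1), twist χ n *
      ((max (y - n) 0 : ℝ) : ℂ) - ∑ n ∈ range (M + 1), twist χ n * ((max (x - n) 0 : ℝ) : ℂ))‖ ≤
      (h + 1) * (h * (2 * u ^ 2)) := by
    have e3 : (h : ℂ) * ∑ n ∈ range (N + 1), twist χ n =
        ∑ n ∈ range (M + 1), if n < N + 1 then (h : ℂ) * twist χ n else 0 := by
      rw [← sum_filter, mul_sum]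
      congr 1
      ext n
      simp only [mem_range, mem_filter]
      omega
    rw [e3, ← sum_sub_distrib, ← sum_sub_distrib]
    have e4 : ∑ n ∈ range (M + 1), ((if n < N + 1 then (h : ℂ) * twist χ n else 0) -
        (twist χ n * ((max (y - n) 0 : ℝ) : ℂ) - twist χ n * ((max (x - n) 0 : ℝ) : ℂ))) =
        ∑ n ∈ Ico (N + 1) (M + 1), ((if n < N + 1 then (h : ℂ) * twist χ n else 0) -
        (twist χ n * ((max (y - n) 0 : ℝ) : ℂ) - twist χ n * ((max (x - n) 0 : ℝ) : ℂ))) := by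
      symm
      refine sum_subset (fun n hn => by simp at hn ⊢; omega) fun n hn hn' => ?_
      have hnN : n < N + 1 := by
        simp only [mem_range, mem_Ico, not_and, not_lt] at hn hn'
        by_contra! hcon
        have := hn' hcon
        omega
      have hnx : (n : ℝ) ≤ x := (Nat.le_floor_iff hx0.le).1 (by omega)
      rw [if_pos hnN, max_eq_left (by linarith), max_eq_left (by linarith), hy]
      push_cast
      ring
    rw [e4]
    refine (norm_sum_le_of_le _ (f := fun n => (if n < N + 1 then (h : ℂ) * twist χ n else 0) -
        (twist χ n * ((max (y - n) 0 : ℝ) : ℂ) - twist χ n * ((max (x - n) 0 : ℝ) : ℂ)))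
        (n := fun _ => h * (2 * u ^ 2)) fun n hn => ?_).trans ?_
    · rw [mem_Ico] at hn
      have hnx : x < n := (Nat.floor_lt hx0.le).1 (by omega)
      have hny : (n : ℝ) ≤ y := (Nat.le_floor_iff hy0.le).1 (by omega)
      rw [if_neg (by omega), max_eq_right (a := x - n) (by linarith),
        max_eq_left (a := y - n) (by linarith)]
      simp only [Complex.ofReal_zero, mul_zero, sub_zero, zero_sub, norm_neg]
      rw [norm_mul, Complex.norm_real, Real.norm_of_nonneg (by linarith), mul_comm]
      have h1 := norm_twist_le χ n
      have h2 : Real.log n ≤ Real.log y := Real.log_le_log (by linarith) hny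
      exact mul_le_mul (by linarith) (by linarith) (norm_nonneg _) hh0.le
    · rw [sum_const, Nat.card_Ico, nsmul_eq_mul]
      gcongr
      rw [Nat.cast_sub (by omega)]
      push_cast
      have h1 := Nat.floor_le hy0.le
      have h2 := Nat.lt_floor_add_one x
      linarith
  rw [← e1, ← e2] at key
  set P := ∑ n ∈ range (N + 1), twist χ n with hP
  set Sx := ∑ n ∈ range (N + 1), twist χ n * tent (n / x) with hSx
  set Sy := ∑ n ∈ range (M + 1), twist χ n * tent (n / y) with hSy
  have h1 : h * ‖P‖ ≤ y * ‖Sy‖ + x * ‖Sx‖ + (h + 1) * (h * (2 * u ^ 2)) := by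
    have e5 : h * ‖P‖ = ‖(h : ℂ) * P‖ := by
      rw [norm_mul, Complex.norm_real, Real.norm_of_nonneg hh0.le]
    have e6 : y * ‖Sy‖ = ‖(y : ℂ) * Sy‖ := by
      rw [norm_mul, Complex.norm_real, Real.norm_of_nonneg hy0.le]
    have e7 : x * ‖Sx‖ = ‖(x : ℂ) * Sx‖ := by
      rw [norm_mul, Complex.norm_real, Real.norm_of_nonneg hx0.le]
    rw [e5, e6, e7]
    have h2 := norm_sub_norm_le ((h : ℂ) * P) ((y : ℂ) * Sy - (x : ℂ) * Sx)
    have h3 := norm_sub_le ((y : ℂ) * Sy) ((x : ℂ) * Sx)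
    linarith
  have h2 : y * ‖Sy‖ ≤ 4 * A * x * E * h := by
    calc y * ‖Sy‖ ≤ y * (A * y * Real.exp (-c₀ * √(Real.log y))) := by gcongr
      _ ≤ (2 * x) * (A * (2 * x) * (E * E)) := by
          have : y ≤ 2 * x := by linarith
          gcongr
      _ = _ := by rw [hh]; ring
  have h3 : x * ‖Sx‖ ≤ A * x * E * h := by
    calc x * ‖Sx‖ ≤ x * (A * x * Real.exp (-c₀ * u)) := by gcongr
      _ = _ := by rw [hEE, hh]; ring
  have h4 : (h + 1) * (h * (2 * u ^ 2)) ≤ 4 * u ^ 2 * (x * E) * h := by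
    rw [← hh]
    have : 0 ≤ h * u ^ 2 := by positivity
    nlinarith
  have h5 : ‖P‖ ≤ 5 * A * x * E + 4 * u ^ 2 * (x * E) := by
    refine le_of_mul_le_mul_left (a := h) ?_ hh0
    linarith
  have hEF : E = Real.exp (-(c₀ / 4) * u) * Real.exp (-(c₀ / 4) * u) := by
    rw [hE, ← Real.exp_add]; congr 1; ring
  set F := Real.exp (-(c₀ / 4) * u) with hF
  have hF0 : 0 < F := Real.exp_pos _
  have hF1 : F ≤ 1 := Real.exp_le_one_iff.2 (by nlinarith)
  have h6 : u ^ 2 * F ≤ 2 / (c₀ / 4) ^ 2 := by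
    have h1 := sq_le_exp (show 0 < c₀ / 4 by positivity) (show 0 ≤ u by linarith)
    calc u ^ 2 * F ≤ (2 / (c₀ / 4) ^ 2 * Real.exp (c₀ / 4 * u)) * F := by gcongr
      _ = _ := by
        rw [mul_assoc, hF, ← Real.exp_add]
        have : c₀ / 4 * u + -(c₀ / 4) * u = 0 := by ring
        rw [this, Real.exp_zero, mul_one]
  calc ‖P‖ ≤ 5 * A * x * E + 4 * u ^ 2 * (x * E) := h5
    _ = 5 * A * x * F * F + 4 * (u ^ 2 * F) * (x * F) := by rw [hEF]; ring
    _ ≤ 5 * A * x * F * 1 + 4 * (2 / (c₀ / 4) ^ 2) * (x * F) := by gcongr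
    _ = _ := by ring

end PsiBound

/-! ### Character sums over primes -/

section PrimeSums

variable {k : ℕ} [NeZero k] (χ : DirichletCharacter ℂ k)

set_option linter.unusedSectionVars false

/-- `χ(n) log n` on primes and zero elsewhere: the summand of the twisted Chebyshev function
`θ(x, χ)`. -/
noncomputable def twistPrime {k : ℕ} (χ : DirichletCharacter ℂ k) (n : ℕ) : ℂ :=
  if n.Prime then χ n * Real.log n else 0

/-- Abel's inequality, with the boundary term `g n * S n` split off so that the induction closes. -/
lemma abel_aux (a : ℕ → ℂ) (g : ℕ → ℝ) (hg : Antitone g) {B : ℝ}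
    (hS : ∀ j, ‖∑ i ∈ range j, a i‖ ≤ B) (n : ℕ) :
    ‖∑ i ∈ range n, g i * a i - g n * ∑ i ∈ range n, a i‖ ≤ B * (g 0 - g n) := by
  induction n with
  | zero => simp
  | succ n ih =>
    have h1 : ∑ i ∈ range (n + 1), g i * a i - g (n + 1) * ∑ i ∈ range (n + 1), a i =
        (∑ i ∈ range n, g i * a i - g n * ∑ i ∈ range n, a i) +
          ((g n - g (n + 1) : ℝ) : ℂ) * ∑ i ∈ range (n + 1), a i := by
      rw [sum_range_succ, sum_range_succ]; push_cast; ring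
    have h2 : 0 ≤ g n - g (n + 1) := sub_nonneg.2 (hg (Nat.le_succ n))
    rw [h1]
    calc _ ≤ B * (g 0 - g n) + (g n - g (n + 1)) * B := by
          refine (norm_add_le _ _).trans (add_le_add ih ?_)
          rw [norm_mul, Complex.norm_real, Real.norm_of_nonneg h2]
          exact mul_le_mul_of_nonneg_left (hS _) h2
      _ = _ := by ring

lemma abel_inequality (a : ℕ → ℂ) (g : ℕ → ℝ) (hg : Antitone g) (hg0 : ∀ n, 0 ≤ g n) {B : ℝ}
    (hS : ∀ j, ‖∑ i ∈ range j, a i‖ ≤ B) (n : ℕ) :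
    ‖∑ i ∈ range n, g i * a i‖ ≤ B * g 0 := by
  have h := abel_aux a g hg hS n
  have h2 : ‖(g n : ℂ) * ∑ i ∈ range n, a i‖ ≤ g n * B := by
    rw [norm_mul, Complex.norm_real, Real.norm_of_nonneg (hg0 n)]
    exact mul_le_mul_of_nonneg_left (hS _) (hg0 n)
  calc _ = ‖(∑ i ∈ range n, g i * a i - g n * ∑ i ∈ range n, a i) +
        g n * ∑ i ∈ range n, a i‖ := by congr 1; ring
    _ ≤ B * (g 0 - g n) + g n * B := (norm_add_le _ _).trans (add_le_add h h2)
    _ = _ := by ring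

lemma norm_sum_twist_sub_le {x : ℝ} (hx : 1 ≤ x) :
    ‖∑ n ∈ range (⌊x⌋₊ + 1), twist χ n - ∑ n ∈ range (⌊x⌋₊ + 1), twistPrime χ n‖ ≤
      2 * √x * Real.log x := by
  refine le_trans ?_ (Chebyshev.psi_sub_theta_le hx)
  rw [Chebyshev.psi_sub_theta_eq_sum_not_prime, ← sum_sub_distrib, sum_range_succ', sum_filter]
  have h0 : twist χ 0 - twistPrime χ 0 = 0 := by simp [twist, twistPrime]
  rw [h0, add_zero, range_eq_Ico]
  have : ∑ n ∈ Ioc 0 ⌊x⌋₊, (if ¬ n.Prime then ArithmeticFunction.vonMangoldt n else 0) =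
      ∑ n ∈ Ico 0 ⌊x⌋₊, (if ¬ (n + 1).Prime then ArithmeticFunction.vonMangoldt (n + 1) else 0) := by
    rw [sum_Ico_add' (fun n => if ¬ n.Prime then ArithmeticFunction.vonMangoldt n else 0)]
    rfl
  rw [this]
  refine norm_sum_le_of_le _ fun n _ => ?_
  by_cases hp : (n + 1).Prime
  · simp [twist, twistPrime, hp, ArithmeticFunction.vonMangoldt_apply_prime hp]
  · simp only [twist, twistPrime, hp, if_false, sub_zero, not_false_eq_true, if_true, norm_mul,
      Complex.norm_real, Real.norm_of_nonneg ArithmeticFunction.vonMangoldt_nonneg]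
    exact mul_le_of_le_one_left ArithmeticFunction.vonMangoldt_nonneg (χ.norm_le_one _)

lemma exists_theta_bound (hχ : χ ≠ 1) : ∃ A c₀ : ℝ, 0 < A ∧ 0 < c₀ ∧
    ∀ x : ℝ, Real.exp 1 ≤ x →
      ‖∑ n ∈ range (⌊x⌋₊ + 1), twistPrime χ n‖ ≤ A * x * Real.exp (-c₀ * √(Real.log x)) := by
  obtain ⟨A, c₀, hA, hc, hc1, H⟩ := exists_psi_bound χ hχ
  refine ⟨A + 2 * (2 / (1 / 4) ^ 2 ) * Real.exp c₀, c₀ / 8, by positivity, by positivity,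
    fun x hx => ?_⟩
  have hx1 : 1 ≤ x := le_trans (Real.one_le_exp zero_le_one) hx
  have hx0 : 0 < x := by linarith
  set u := √(Real.log x) with hu
  have hL : 1 ≤ Real.log x := by rwa [Real.le_log_iff_exp_le hx0]
  have hu1 : 1 ≤ u := Real.one_le_sqrt.2 hL
  have huu : u ^ 2 = Real.log x := Real.sq_sqrt (by linarith)
  have hxe : x = Real.exp (u ^ 2) := by rw [huu, Real.exp_log hx0]
  have hsx : √x = Real.exp (u ^ 2 / 2) := by
    rw [Real.sqrt_eq_iff_mul_self_eq hx0.le (Real.exp_pos _).le, ← Real.exp_add, hxe]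
    congr 1; ring
  have h1 := H x hx
  have h2 := norm_sum_twist_sub_le χ hx1
  have h3 : 2 * √x * Real.log x ≤
      2 * (2 / (1 / 4) ^ 2) * Real.exp c₀ * x * Real.exp (-(c₀ / 8) * u) := by
    have := sq_le_exp (a := 1 / 4) (u := u) (by norm_num) (by linarith)
    rw [hsx, ← huu]
    calc 2 * Real.exp (u ^ 2 / 2) * u ^ 2
        ≤ 2 * Real.exp (u ^ 2 / 2) * (2 / (1 / 4) ^ 2 * Real.exp (1 / 4 * u)) := by gcongr
      _ = 2 * (2 / (1 / 4) ^ 2) * Real.exp (u ^ 2 / 2 + 1 / 4 * u) := by rw [Real.exp_add]; ring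
      _ ≤ 2 * (2 / (1 / 4) ^ 2) * Real.exp (c₀ + u ^ 2 + -(c₀ / 8) * u) := by
          refine mul_le_mul_of_nonneg_left (Real.exp_le_exp.2 ?_) (by norm_num)
          nlinarith
      _ = _ := by
          rw [Real.exp_add, Real.exp_add, ← hxe]; ring
  have h4 : A * x * Real.exp (-c₀ * u) ≤ A * x * Real.exp (-(c₀ / 8) * u) := by
    gcongr
    nlinarith
  calc ‖∑ n ∈ range (⌊x⌋₊ + 1), twistPrime χ n‖ = ‖∑ n ∈ range (⌊x⌋₊ + 1), twist χ n -
        (∑ n ∈ range (⌊x⌋₊ + 1), twist χ n - ∑ n ∈ range (⌊x⌋₊ + 1), twistPrime χ n)‖ := by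
        rw [sub_sub_cancel]
    _ ≤ _ := norm_sub_le _ _
    _ ≤ A * x * Real.exp (-(c₀ / 8) * u) +
        2 * (2 / (1 / 4) ^ 2) * Real.exp c₀ * x * Real.exp (-(c₀ / 8) * u) :=
      add_le_add (h1.trans h4) (h2.trans h3)
    _ = _ := by ring

/-- Character sums over the primes in `(m, N]`, saving `exp (-c √(log y))` as soon as `m ≥ y`. -/
lemma exists_prime_sum_bound (hχ : χ ≠ 1) : ∃ A c₀ : ℝ, 0 < A ∧ 0 < c₀ ∧
    ∀ (y : ℝ) (m N : ℕ), Real.exp 1 ≤ y → y ≤ m →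
      ‖∑ p ∈ (Ioc m N).filter Nat.Prime, χ p‖ ≤ A * N * Real.exp (-c₀ * √(Real.log y)) := by
  obtain ⟨A, c₀, hA, hc, H⟩ := exists_theta_bound χ hχ
  refine ⟨2 * A, c₀, by positivity, hc, fun y m N hy hym => ?_⟩
  rcases le_or_gt N m with hNm | hNm
  · rw [Ioc_eq_empty_of_le hNm]; simp; positivity
  have hy0 : 0 < y := (Real.exp_pos 1).trans_le hy
  have hT : ∀ n : ℕ, m ≤ n → n ≤ N →
      ‖∑ i ∈ range (n + 1), twistPrime χ i‖ ≤ A * N * Real.exp (-c₀ * √(Real.log y)) := by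
    intro n hn hnN
    have hyn : y ≤ n := hym.trans (by exact_mod_cast hn)
    have h := H n (hy.trans hyn)
    rw [Nat.floor_natCast] at h
    refine h.trans ?_
    have h1 : (n : ℝ) ≤ N := by exact_mod_cast hnN
    have h2 : √(Real.log y) ≤ √(Real.log n) := Real.sqrt_le_sqrt (Real.log_le_log hy0 hyn)
    have h3 : -c₀ * √(Real.log n) ≤ -c₀ * √(Real.log y) := by nlinarith
    gcongr
  set B := A * N * Real.exp (-c₀ * √(Real.log y)) with hB
  have hB0 : 0 ≤ B := by positivity
  -- the summand, cut off at `N`, so that all partial sums obey the same bound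
  set a : ℕ → ℂ := fun i => if m + 1 + i ≤ N then twistPrime χ (m + 1 + i) else 0 with ha
  have hpart : ∀ j, m + j ≤ N → ‖∑ i ∈ range j, a i‖ ≤ 2 * B := by
    intro j hj
    have h1 : ∑ i ∈ range j, a i = ∑ i ∈ range (m + j + 1), twistPrime χ i -
        ∑ i ∈ range (m + 1), twistPrime χ i := by
      rw [show m + j + 1 = m + 1 + j by ring, sum_range_add, add_sub_cancel_left]
      refine sum_congr rfl fun i hi => ?_
      rw [mem_range] at hi
      rw [ha]; simp only; rw [if_pos (by omega)]
    rw [h1]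
    calc _ ≤ B + B := (norm_sub_le _ _).trans
          (add_le_add (hT _ (by omega) hj) (hT _ le_rfl hNm.le))
      _ = _ := by ring
  have hS : ∀ j, ‖∑ i ∈ range j, a i‖ ≤ 2 * B := by
    intro j
    rcases le_or_gt (m + j) N with hj | hj
    · exact hpart j hj
    · have : ∑ i ∈ range j, a i = ∑ i ∈ range (N - m), a i := by
        symm
        refine sum_subset (range_subset_range.2 (by omega)) fun i _ hi => ?_
        rw [mem_range] at hi
        rw [ha]; simp only; rw [if_neg (by omega)]
      rw [this]
      exact hpart _ (by omega)
  have hm1 : Real.exp 1 ≤ m := hy.trans hym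
  have hm0 : (0 : ℝ) < m := (Real.exp_pos 1).trans_le hm1
  have hlog : ∀ i : ℕ, 1 ≤ Real.log ((m + 1 + i : ℕ) : ℝ) := by
    intro i
    rw [Real.le_log_iff_exp_le (by positivity)]
    refine hm1.trans ?_
    push_cast
    have : (0 : ℝ) ≤ i := by positivity
    linarith
  have key := abel_inequality a (fun i => (Real.log ((m + 1 + i : ℕ) : ℝ))⁻¹)
    (fun i j hij => by
      have := hlog i
      have h2 : Real.log ((m + 1 + i : ℕ) : ℝ) ≤ Real.log ((m + 1 + j : ℕ) : ℝ) :=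
        Real.log_le_log (by positivity) (by exact_mod_cast by omega)
      simp only
      gcongr)
    (fun i => inv_nonneg.2 (by linarith [hlog i])) hS (N - m)
  have hsum : ∑ p ∈ (Ioc m N).filter Nat.Prime, χ p =
      ∑ i ∈ range (N - m), (((Real.log ((m + 1 + i : ℕ) : ℝ))⁻¹ : ℝ) : ℂ) * a i := by
    rw [sum_filter]
    have : Ioc m N = Ico (m + 1) (N + 1) := by
      ext i; simp only [mem_Ioc, mem_Ico]; omega
    rw [this, sum_Ico_eq_sum_range, show N + 1 - (m + 1) = N - m by omega]
    refine sum_congr rfl fun i hi => ?_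
    rw [mem_range] at hi
    have h1 : ((Real.log ((m + 1 + i : ℕ) : ℝ) : ℝ) : ℂ) ≠ 0 := by
      exact_mod_cast (by linarith [hlog i] : Real.log ((m + 1 + i : ℕ) : ℝ) ≠ 0)
    have hi2 : m + 1 + i ≤ N := by omega
    simp only [ha, hi2, if_true, twistPrime]
    split_ifs with hp
    · rw [Complex.ofReal_inv]; field_simp
    · simp
  rw [hsum]
  refine key.trans ?_
  have : (Real.log ((m + 1 + 0 : ℕ) : ℝ))⁻¹ ≤ 1 := inv_le_one_of_one_le₀ (hlog 0)
  calc 2 * B * (Real.log ((m + 1 + 0 : ℕ) : ℝ))⁻¹ ≤ 2 * B * 1 := by gcongr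
    _ = _ := by rw [hB]; ring

end PrimeSums

/-! ### Smooth numbers -/

section Smooth

/-- `n ↦ n ^ (-σ)` as a multiplicative map. -/
noncomputable def negRpow (σ : ℝ) : ℕ →* ℝ where
  toFun n := (n : ℝ) ^ (-σ)
  map_one' := by simp
  map_mul' m n := by push_cast; exact Real.mul_rpow (by positivity) (by positivity)

lemma negRpow_apply (σ : ℝ) (n : ℕ) : negRpow σ n = (n : ℝ) ^ (-σ) := rfl

lemma negRpow_nonneg (σ : ℝ) (n : ℕ) : 0 ≤ negRpow σ n := by
  rw [negRpow_apply]; positivity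

lemma negRpow_prime_lt_one {σ : ℝ} (hσ : 0 < σ) {p : ℕ} (hp : p.Prime) : negRpow σ p < 1 := by
  rw [negRpow_apply]
  exact Real.rpow_lt_one_of_one_lt_of_neg (by exact_mod_cast hp.one_lt) (by linarith)

/-- A partial Euler product of `ζ(1 + η)` is `O(1 / η)`. -/
lemma prod_primesBelow_le {η : ℝ} (h0 : 0 < η) (h1 : η ≤ 1) (N : ℕ) :
    ∏ p ∈ N.primesBelow, (1 - negRpow (1 + η) p)⁻¹ ≤ 7 / η := by
  have hsum : Summable (negRpow (1 + η)) := by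
    have := Real.summable_nat_rpow (p := -(1 + η))
    exact this.2 (by linarith)
  rw [EulerProduct.prod_primesBelow_geometric_eq_tsum_smoothNumbers hsum]
  have h2 := tsum_rpow_le (σ := 1 + η) (by linarith) (by linarith)
  rw [add_sub_cancel_left] at h2
  refine le_trans ?_ h2
  have h3 : ∀ n : ℕ, ‖LSeries.term 1 ((1 + η : ℝ) : ℂ) n‖ = negRpow (1 + η) n := by
    intro n
    rw [LSeries.norm_term_eq, negRpow_apply, Complex.ofReal_re]
    split_ifs with h
    · rw [h, Nat.cast_zero, Real.zero_rpow (by linarith)]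
    · rw [Real.rpow_neg (by positivity)]; simp
  simp_rw [h3]
  exact Summable.tsum_subtype_le (negRpow (1 + η)) _ (fun n => negRpow_nonneg _ n) hsum

/-- Rankin's trick with exponent `1 - 1 / log N`. -/
lemma smoothNumbersUpTo_card_le_rankin {x : ℝ} (hx : 1 ≤ x) {N : ℕ} (hN : 2 ≤ Real.log N) :
    ((Nat.smoothNumbersUpTo ⌊x⌋₊ N).card : ℝ) ≤
      x * Real.exp (-(Real.log x / Real.log N)) * (7 * Real.log N) ^ 30 := by
  set η := 1 / Real.log N with hη
  have hη0 : 0 < η := by positivity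
  have hη1 : η ≤ 1 / 2 := one_div_le_one_div_of_le (by norm_num) hN
  have hx0 : 0 < x := by linarith
  set f := negRpow (1 - η) with hf
  have hf1 : ∀ {p : ℕ}, p.Prime → ‖f p‖ < 1 := by
    intro p hp
    rw [Real.norm_of_nonneg (negRpow_nonneg _ _)]
    exact negRpow_prime_lt_one (by linarith) hp
  obtain ⟨hs, hsum⟩ := EulerProduct.summable_and_hasSum_smoothNumbers_prod_primesBelow_geometric hf1 N
  -- each smooth `n ≤ x` contributes at least `1` to `x ^ σ * ∑ n ^ (-σ)`
  have hcard : ((Nat.smoothNumbersUpTo ⌊x⌋₊ N).card : ℝ) ≤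
      x ^ (1 - η) * ∏ p ∈ N.primesBelow, (1 - f p)⁻¹ := by
    have h1 : ∑ n ∈ Nat.smoothNumbersUpTo ⌊x⌋₊ N, f n ≤ ∏ p ∈ N.primesBelow, (1 - f p)⁻¹ := by
      have h2 := sum_le_hasSum ((Nat.smoothNumbersUpTo ⌊x⌋₊ N).subtype (· ∈ N.smoothNumbers))
        (fun i _ => negRpow_nonneg _ _) hsum
      rwa [Finset.sum_subtype_eq_sum_filter, Finset.filter_true_of_mem] at h2
      intro n hn
      exact (Nat.mem_smoothNumbersUpTo.1 hn).2
    calc ((Nat.smoothNumbersUpTo ⌊x⌋₊ N).card : ℝ)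
        = ∑ n ∈ Nat.smoothNumbersUpTo ⌊x⌋₊ N, (1 : ℝ) := by simp
      _ ≤ ∑ n ∈ Nat.smoothNumbersUpTo ⌊x⌋₊ N, x ^ (1 - η) * f n := by
          refine sum_le_sum fun n hn => ?_
          obtain ⟨hnx, hns⟩ := Nat.mem_smoothNumbersUpTo.1 hn
          have hn0 : 0 < n := Nat.pos_of_ne_zero (Nat.ne_zero_of_mem_smoothNumbers hns)
          have hn0' : (0 : ℝ) < n := by exact_mod_cast hn0
          have hnx' : (n : ℝ) ≤ x := (Nat.le_floor_iff hx0.le).1 hnx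
          rw [hf, negRpow_apply, Real.rpow_neg hn0'.le, ← div_eq_mul_inv,
            one_le_div (by positivity)]
          exact Real.rpow_le_rpow hn0'.le hnx' (by linarith)
      _ = x ^ (1 - η) * ∑ n ∈ Nat.smoothNumbersUpTo ⌊x⌋₊ N, f n := by rw [mul_sum]
      _ ≤ _ := by gcongr
  have hprod : ∏ p ∈ N.primesBelow, (1 - f p)⁻¹ ≤ (7 * Real.log N) ^ 30 := by
    have h7 := prod_primesBelow_le hη0 (by linarith) N
    have e7 : 7 / η = 7 * Real.log N := by rw [hη]; field_simp
    rw [e7] at h7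
    have hpt : ∀ p ∈ N.primesBelow, (1 - f p)⁻¹ ≤ ((1 - negRpow (1 + η) p)⁻¹) ^ 30 := by
      intro p hp
      obtain ⟨hpN, hpp⟩ := Nat.mem_primesBelow.1 hp
      have hp0 : (0 : ℝ) < p := by exact_mod_cast hpp.pos
      have hp2 : (2 : ℝ) ≤ p := by exact_mod_cast hpp.two_le
      set v := negRpow (1 + η) p with hv
      have hv0 : 0 ≤ v := negRpow_nonneg _ _
      have hv1 : v < 1 := negRpow_prime_lt_one (by linarith) hpp
      set w := f p with hw
      have hw0 : 0 ≤ w := negRpow_nonneg _ _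
      have hw1 : w ≤ 3 / 4 := by
        have h1 : w ≤ (2 : ℝ) ^ (-(1 / 2) : ℝ) := by
          rw [hw, hf, negRpow_apply, Real.rpow_neg hp0.le, Real.rpow_neg (by norm_num)]
          refine inv_anti₀ (by positivity) ?_
          calc (2 : ℝ) ^ (1 / 2 : ℝ) ≤ (p : ℝ) ^ (1 / 2 : ℝ) := by gcongr
            _ ≤ _ := Real.rpow_le_rpow_of_exponent_le (by linarith) (by linarith)
        refine h1.trans ?_
        rw [Real.rpow_neg (by norm_num), ← Real.sqrt_eq_rpow, inv_le_comm₀ (by positivity) (by norm_num)]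
        exact Real.le_sqrt_of_sq_le (by norm_num)
      have hwv : w ≤ 7.5 * v := by
        have h1 : w = v * (p : ℝ) ^ (2 * η) := by
          rw [hw, hv, hf, negRpow_apply, negRpow_apply, ← Real.rpow_add hp0]
          congr 1; ring
        have h2 : (p : ℝ) ^ (2 * η) ≤ 7.5 := by
          have h3 : Real.log p ≤ Real.log N := Real.log_le_log hp0 (by exact_mod_cast hpN.le)
          rw [Real.rpow_def_of_pos hp0]
          have h4 : Real.log p * (2 * η) ≤ 2 := by
            rw [hη, mul_one_div, mul_div_assoc', div_le_iff₀ (by linarith)]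
            linarith
          calc Real.exp (Real.log p * (2 * η)) ≤ Real.exp 2 := Real.exp_le_exp.2 h4
            _ = Real.exp 1 ^ 2 := by rw [← Real.exp_nat_mul]; norm_num
            _ ≤ 2.7182818286 ^ 2 := by gcongr; exact Real.exp_one_lt_d9.le
            _ ≤ 7.5 := by norm_num
        rw [h1, mul_comm]
        gcongr
      -- `(1 - w)⁻¹ ≤ exp (w / (1 - w)) ≤ exp (4 w) ≤ exp (30 v) ≤ (1 - v) ^ (-30)`
      calc (1 - w)⁻¹ = w / (1 - w) + 1 := by
            have : (1 - w) ≠ 0 := by linarith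
            field_simp; ring
        _ ≤ Real.exp (w / (1 - w)) := Real.add_one_le_exp _
        _ ≤ Real.exp (30 * v) := by
            refine Real.exp_le_exp.2 ?_
            rw [div_le_iff₀ (by linarith)]
            nlinarith
        _ = Real.exp v ^ 30 := by rw [← Real.exp_nat_mul]; norm_num
        _ ≤ _ := by
            gcongr
            rw [le_inv_comm₀ (Real.exp_pos _) (by linarith), ← Real.exp_neg]
            linarith [Real.add_one_le_exp (-v)]
    calc _ ≤ ∏ p ∈ N.primesBelow, ((1 - negRpow (1 + η) p)⁻¹) ^ 30 := by
          refine prod_le_prod (fun p hp => ?_) hpt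
          have := hf1 (Nat.mem_primesBelow.1 hp).2
          rw [Real.norm_of_nonneg (negRpow_nonneg _ _)] at this
          exact inv_nonneg.2 (by linarith)
      _ = (∏ p ∈ N.primesBelow, (1 - negRpow (1 + η) p)⁻¹) ^ 30 := prod_pow _ _ _
      _ ≤ _ := by
          refine pow_le_pow_left₀ (prod_nonneg fun p hp => ?_) h7 30
          have := negRpow_prime_lt_one (σ := 1 + η) (by linarith) (Nat.mem_primesBelow.1 hp).2
          exact inv_nonneg.2 (by linarith)
  have hxp : x ^ (1 - η) = x * Real.exp (-(Real.log x / Real.log N)) := by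
    rw [Real.rpow_def_of_pos hx0, mul_sub, mul_one, sub_eq_add_neg, Real.exp_add,
      Real.exp_log hx0, hη, mul_one_div]
  rw [← hxp]
  exact hcard.trans (by gcongr)

end Smooth

/-! ### Sums over the largest prime factor -/

section LargestPrime

lemma maxPrimeFac_mem {n : ℕ} (hn : 2 ≤ n) : maxPrimeFac n ∈ n.primeFactors := by
  have h : n.primeFactors.Nonempty := Nat.nonempty_primeFactors.2 (by omega)
  obtain ⟨p, hp, hpe⟩ := exists_mem_eq_sup n.primeFactors h id
  rw [maxPrimeFac, hpe]; exact hp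

lemma le_maxPrimeFac {n p : ℕ} (hp : p ∈ n.primeFactors) : p ≤ maxPrimeFac n :=
  le_sup (f := id) hp

lemma maxPrimeFac_mul {m p : ℕ} (hm : m ≠ 0) (hp : p.Prime) (h : maxPrimeFac m ≤ p) :
    maxPrimeFac (m * p) = p := by
  rw [maxPrimeFac, Nat.primeFactors_mul hm hp.ne_zero, sup_union, hp.primeFactors, sup_singleton]
  exact sup_eq_right.2 h

lemma maxPrimeFac_le_of_dvd {m n : ℕ} (hn : n ≠ 0) (h : m ∣ n) : maxPrimeFac m ≤ maxPrimeFac n :=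
  sup_mono (Nat.primeFactors_mono h hn)

lemma card_maxPrimeFac_le (M Y : ℕ) :
    ((Icc 2 M).filter (fun n => maxPrimeFac n ≤ Y)).card ≤
      (Nat.smoothNumbersUpTo M (Y + 1)).card := by
  refine card_le_card fun n hn => ?_
  rw [mem_filter, mem_Icc] at hn
  rw [Nat.mem_smoothNumbersUpTo, Nat.mem_smoothNumbers']
  refine ⟨hn.1.2, fun p hp hpn => ?_⟩
  have := le_maxPrimeFac (Nat.mem_primeFactors.2 ⟨hp, hpn, by omega⟩)
  omega

/-- Writing `n = m p` with `p = P(n)`, the integers `n ≤ M` with `P(n) > Y` correspond to pairs with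
`max(Y, P(m) - 1) < p ≤ M / m`. -/
lemma sum_maxPrimeFac_eq (g : ℕ → ℂ) (M Y : ℕ) :
    ∑ n ∈ (Icc 2 M).filter (fun n => ¬ maxPrimeFac n ≤ Y), g (maxPrimeFac n) =
      ∑ m ∈ Icc 1 M, ∑ p ∈ (Ioc (max Y (maxPrimeFac m - 1)) (M / m)).filter Nat.Prime, g p := by
  rw [sum_sigma']
  refine sum_bij' (fun n _ => ⟨n / maxPrimeFac n, maxPrimeFac n⟩) (fun s _ => s.1 * s.2)
    ?_ ?_ ?_ ?_ ?_
  · intro n hn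
    rw [mem_filter, mem_Icc] at hn
    obtain ⟨⟨hn2, hnM⟩, hY⟩ := hn
    have hP := maxPrimeFac_mem hn2
    have hPp := Nat.prime_of_mem_primeFactors hP
    have hPd := Nat.dvd_of_mem_primeFactors hP
    have hle : maxPrimeFac (n / maxPrimeFac n) ≤ maxPrimeFac n :=
      maxPrimeFac_le_of_dvd (by omega) (Nat.div_dvd_of_dvd hPd)
    have hpos : 0 < n / maxPrimeFac n := Nat.div_pos (Nat.le_of_dvd (by omega) hPd) hPp.pos
    have hmul : n / maxPrimeFac n * maxPrimeFac n = n := Nat.div_mul_cancel hPd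
    simp only [mem_sigma, mem_filter, mem_Icc, mem_Ioc]
    have := hPp.two_le
    refine ⟨⟨hpos, (Nat.div_le_self _ _).trans hnM⟩, ⟨by omega, ?_⟩, hPp⟩
    rw [Nat.le_div_iff_mul_le hpos, mul_comm, hmul]
    exact hnM
  · rintro ⟨m, p⟩ hs
    simp only [mem_sigma, mem_filter, mem_Icc, mem_Ioc] at hs
    obtain ⟨⟨hm1, hmM⟩, ⟨hlt, hle⟩, hp⟩ := hs
    simp only [mem_filter, mem_Icc]
    rw [maxPrimeFac_mul (by omega) hp (by omega)]
    rw [Nat.le_div_iff_mul_le (by omega), mul_comm] at hle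
    have := hp.two_le
    refine ⟨⟨by nlinarith, hle⟩, by omega⟩
  · intro n hn
    rw [mem_filter, mem_Icc] at hn
    exact Nat.div_mul_cancel (Nat.dvd_of_mem_primeFactors (maxPrimeFac_mem hn.1.1))
  · rintro ⟨m, p⟩ hs
    simp only [mem_sigma, mem_filter, mem_Icc, mem_Ioc] at hs
    obtain ⟨⟨hm1, hmM⟩, ⟨hlt, hle⟩, hp⟩ := hs
    have h1 : maxPrimeFac (m * p) = p := maxPrimeFac_mul (by omega) hp (by omega)
    simp only [h1, Nat.mul_div_cancel _ hp.pos]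
  · intro n hn
    rfl

variable {k : ℕ} [NeZero k] (χ : DirichletCharacter ℂ k)

set_option linter.unusedSectionVars false

lemma exists_split_bound (hχ : χ ≠ 1) : ∃ A c₀ : ℝ, 0 < A ∧ 0 < c₀ ∧
    ∀ (x : ℝ) (Y : ℕ), 1 ≤ x → Real.exp 1 ≤ Y →
      ‖∑ n ∈ Icc 2 ⌊x⌋₊, χ (maxPrimeFac n)‖ ≤ (Nat.smoothNumbersUpTo ⌊x⌋₊ (Y + 1)).card +
        A * x * (1 + Real.log x) * Real.exp (-c₀ * √(Real.log Y)) := by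
  obtain ⟨A, c₀, hA, hc, H⟩ := exists_prime_sum_bound χ hχ
  refine ⟨A, c₀, hA, hc, fun x Y hx hY => ?_⟩
  rw [← sum_filter_add_sum_filter_not _ (fun n => maxPrimeFac n ≤ Y)]
  refine (norm_add_le _ _).trans (add_le_add ?_ ?_)
  · calc _ ≤ ∑ n ∈ (Icc 2 ⌊x⌋₊).filter (fun n => maxPrimeFac n ≤ Y), (1 : ℝ) :=
          norm_sum_le_of_le _ fun n _ => χ.norm_le_one _
      _ ≤ _ := by
          rw [sum_const, nsmul_eq_mul, mul_one]
          exact_mod_cast card_maxPrimeFac_le _ _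
  · rw [sum_maxPrimeFac_eq (fun n => χ n)]
    calc _ ≤ ∑ m ∈ Icc 1 ⌊x⌋₊, A * x * Real.exp (-c₀ * √(Real.log Y)) * (m : ℝ)⁻¹ := by
          refine norm_sum_le_of_le _ fun m hm => ?_
          refine (H Y _ _ hY (by exact_mod_cast le_max_left _ _)).trans ?_
          have h1 : ((⌊x⌋₊ / m : ℕ) : ℝ) ≤ x * (m : ℝ)⁻¹ := by
            rw [← div_eq_mul_inv]
            refine Nat.cast_div_le.trans ?_
            gcongr
            exact Nat.floor_le (by linarith)
          calc A * ((⌊x⌋₊ / m : ℕ) : ℝ) * Real.exp (-c₀ * √(Real.log Y))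
              ≤ A * (x * (m : ℝ)⁻¹) * Real.exp (-c₀ * √(Real.log Y)) := by gcongr
            _ = _ := by ring
      _ = A * x * Real.exp (-c₀ * √(Real.log Y)) * ∑ m ∈ Icc 1 ⌊x⌋₊, (m : ℝ)⁻¹ := by rw [mul_sum]
      _ ≤ A * x * Real.exp (-c₀ * √(Real.log Y)) * (1 + Real.log x) := by
          have h := harmonic_floor_le_one_add_log x hx
          rw [harmonic_eq_sum_Icc] at h
          push_cast at h
          gcongr
      _ = _ := by ring

lemma exists_pow_le_exp {a : ℝ} (ha : 0 < a) (n : ℕ) :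
    ∃ F > 0, ∀ u : ℝ, 0 ≤ u → u ^ n ≤ F * Real.exp (a * u) := by
  refine ⟨n.factorial / a ^ n, by positivity, fun u hu => ?_⟩
  have := Real.pow_div_factorial_le_exp (a * u) (by positivity) n
  rw [div_le_iff₀ (by positivity), mul_pow] at this
  rw [div_mul_eq_mul_div, le_div_iff₀ (by positivity)]
  linarith

set_option maxHeartbeats 1000000 in
/-- The optimal splitting point is `Y ≈ exp ((log x) ^ (2 / 3))`, which balances the saving
`exp (-log x / log Y)` for smooth numbers against `exp (-c √(log Y))` for primes. -/
lemma exists_nontrivial_bound (hχ : χ ≠ 1) : ∃ C > 0, ∃ c > 0, ∀ x : ℝ, 2 ≤ x →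
    ‖∑ n ∈ Icc 2 ⌊x⌋₊, χ (maxPrimeFac n)‖ ≤
      C * x * Real.exp (-c * Real.log x ^ ((1 : ℝ) / 3)) := by
  obtain ⟨A, c₀, hA, hc, H⟩ := exists_split_bound χ hχ
  set c := min (1 / 4) (c₀ / 2) with hcdef
  have hc0 : 0 < c := by positivity
  have hc1 : c ≤ 1 / 4 := min_le_left _ _
  have hc2 : c ≤ c₀ / 2 := min_le_right _ _
  obtain ⟨F, hF0, hF⟩ := exists_pow_le_exp (a := 1 / 4) (by norm_num) 60
  obtain ⟨G, hG0, hG⟩ := exists_pow_le_exp (a := c₀ / 2) (by positivity) 3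
  obtain ⟨C₁, hC₁⟩ : ∃ C₁ : ℝ, C₁ = 14 ^ 30 * F := ⟨_, rfl⟩
  obtain ⟨C₂, hC₂⟩ : ∃ C₂ : ℝ, C₂ = A * (2 * G) := ⟨_, rfl⟩
  have hC₁0 : 0 < C₁ := by rw [hC₁]; positivity
  have hC₂0 : 0 < C₂ := by rw [hC₂]; positivity
  refine ⟨C₁ + C₂ + Real.exp (c * 2), by positivity, c, hc0, fun x hx => ?_⟩
  have hx0 : 0 < x := by linarith
  have hL0 : 0 < Real.log x := Real.log_pos (by linarith)
  set u := Real.log x ^ ((1 : ℝ) / 3) with hu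
  have hu0 : 0 < u := by positivity
  have hu3 : u ^ 3 = Real.log x := by
    rw [hu, ← Real.rpow_natCast, ← Real.rpow_mul hL0.le]; norm_num
  have hE : 0 < x * Real.exp (-c * u) := by positivity
  rcases le_or_gt u 2 with hu2 | hu2
  · -- bounded `x`: the trivial bound
    have h1 : ‖∑ n ∈ Icc 2 ⌊x⌋₊, χ (maxPrimeFac n)‖ ≤ x := by
      calc _ ≤ ∑ n ∈ Icc 2 ⌊x⌋₊, (1 : ℝ) := norm_sum_le_of_le _ fun n _ => χ.norm_le_one _
        _ ≤ (⌊x⌋₊ : ℝ) := by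
            rw [sum_const, nsmul_eq_mul, mul_one, Nat.card_Icc]
            exact_mod_cast by omega
        _ ≤ x := Nat.floor_le hx0.le
    have h2 : 1 ≤ Real.exp (c * 2) * Real.exp (-c * u) := by
      rw [← Real.exp_add]; exact Real.one_le_exp (by nlinarith)
    have h3 : 0 ≤ (C₁ + C₂) * (x * Real.exp (-c * u)) := by positivity
    nlinarith
  · set Y := ⌈Real.exp (u ^ 2)⌉₊ with hY
    have hYl : Real.exp (u ^ 2) ≤ Y := Nat.le_ceil _
    have hY0 : (0 : ℝ) < Y := (Real.exp_pos _).trans_le hYl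
    have hYu : (Y : ℝ) < Real.exp (u ^ 2) + 1 := Nat.ceil_lt_add_one (Real.exp_pos _).le
    have hlY : u ^ 2 ≤ Real.log Y := (Real.le_log_iff_exp_le hY0).2 hYl
    have hlY1 : u ^ 2 ≤ Real.log ((Y + 1 : ℕ) : ℝ) := by
      refine hlY.trans (Real.log_le_log hY0 ?_); push_cast; linarith
    have hlY2 : Real.log ((Y + 1 : ℕ) : ℝ) ≤ 2 * u ^ 2 := by
      rw [Real.log_le_iff_le_exp (by positivity), two_mul, Real.exp_add]
      push_cast
      have : 4 + 1 ≤ Real.exp (u ^ 2) := by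
        refine le_trans ?_ (Real.add_one_le_exp _); nlinarith
      nlinarith
    have hsq : u ≤ √(Real.log Y) := Real.le_sqrt_of_sq_le hlY
    have h := H x Y (by linarith) (le_trans (Real.exp_le_exp.2 (by nlinarith)) hYl)
    have hS := smoothNumbersUpTo_card_le_rankin (x := x) (by linarith) (N := Y + 1)
      (by nlinarith)
    have hlpos : 0 < Real.log ((Y + 1 : ℕ) : ℝ) := by nlinarith
    have hS2 : ((Nat.smoothNumbersUpTo ⌊x⌋₊ (Y + 1)).card : ℝ) ≤
        C₁ * (x * Real.exp (-c * u)) := by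
      refine hS.trans ?_
      have h1 : u / 2 ≤ Real.log x / Real.log ((Y + 1 : ℕ) : ℝ) := by
        rw [le_div_iff₀ hlpos, ← hu3]
        nlinarith
      calc x * Real.exp (-(Real.log x / Real.log ((Y + 1 : ℕ) : ℝ))) *
            (7 * Real.log ((Y + 1 : ℕ) : ℝ)) ^ 30
          ≤ x * Real.exp (-(u / 2)) * (7 * (2 * u ^ 2)) ^ 30 := by gcongr
        _ = x * Real.exp (-(u / 2)) * (14 ^ 30 * u ^ 60) := by ring
        _ ≤ x * Real.exp (-(u / 2)) *
            (14 ^ 30 * (F * Real.exp (1 / 4 * u))) := by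
            gcongr
            exact hF u hu0.le
        _ = C₁ * (x * Real.exp (-(u / 2) + 1 / 4 * u)) := by rw [hC₁, Real.exp_add]; ring
        _ ≤ _ := by
            refine mul_le_mul_of_nonneg_left (mul_le_mul_of_nonneg_left
              (Real.exp_le_exp.2 ?_) hx0.le) (by positivity)
            nlinarith
    have hP : A * x * (1 + Real.log x) * Real.exp (-c₀ * √(Real.log Y)) ≤
        C₂ * (x * Real.exp (-c * u)) := by
      have h1 : 1 + Real.log x ≤ 2 * u ^ 3 := by rw [← hu3]; nlinarith [sq_nonneg u]
      have h2 : -c₀ * √(Real.log Y) ≤ -c₀ * u := by nlinarith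
      calc A * x * (1 + Real.log x) * Real.exp (-c₀ * √(Real.log Y))
          ≤ A * x * (2 * u ^ 3) * Real.exp (-c₀ * u) := by
            gcongr
        _ ≤ A * x * (2 * (G * Real.exp (c₀ / 2 * u))) *
            Real.exp (-c₀ * u) := by
            gcongr
            exact hG u hu0.le
        _ = C₂ * (x * Real.exp (c₀ / 2 * u + -c₀ * u)) := by rw [hC₂, Real.exp_add]; ring
        _ ≤ _ := by
            refine mul_le_mul_of_nonneg_left (mul_le_mul_of_nonneg_left
              (Real.exp_le_exp.2 ?_) hx0.le) (by positivity)
            nlinarith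
    have h3 : 0 ≤ Real.exp (c * 2) * (x * Real.exp (-c * u)) := by positivity
    linarith

lemma rpow_third_le {t : ℝ} (ht : 0 ≤ t) : t ^ ((1 : ℝ) / 3) ≤ 1 + t := by
  rcases le_total t 1 with h | h
  · have := Real.rpow_le_one ht h (by norm_num : (0 : ℝ) ≤ 1 / 3)
    linarith
  · have := Real.rpow_le_rpow_of_exponent_le h (by norm_num : (1 : ℝ) / 3 ≤ 1)
    rw [Real.rpow_one] at this
    linarith

/-- The principal character only misses the `n` with `P(n) ∣ k`; these have bounded prime factors,
so Rankin's bound saves a power of `x`. -/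
lemma exists_trivial_bound : ∃ C > 0, ∃ c > 0, ∀ x : ℝ, 2 ≤ x →
    ‖∑ n ∈ Icc 2 ⌊x⌋₊, (1 : DirichletCharacter ℂ k) (maxPrimeFac n) - x‖ ≤
      C * x * Real.exp (-c * Real.log x ^ ((1 : ℝ) / 3)) := by
  have hN : 2 ≤ Real.log ((k + 8 : ℕ) : ℝ) := by
    rw [Real.le_log_iff_exp_le (by positivity)]
    have h1 : Real.exp 2 ≤ 8 := by
      calc Real.exp 2 = Real.exp 1 ^ 2 := by rw [← Real.exp_nat_mul]; norm_num
        _ ≤ 2.7182818286 ^ 2 := by gcongr; exact Real.exp_one_lt_d9.le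
        _ ≤ 8 := by norm_num
    push_cast
    have : (0 : ℝ) ≤ k := by positivity
    linarith
  set l := Real.log ((k + 8 : ℕ) : ℝ) with hl
  set a := 1 / l with ha
  have ha0 : 0 < a := by positivity
  have ha1 : a ≤ 1 := by rw [ha, div_le_one (by linarith)]; linarith
  refine ⟨2 * Real.exp a + (7 * l) ^ 30 * Real.exp a, by positivity, a, ha0, fun x hx => ?_⟩
  have hx0 : 0 < x := by linarith
  have hL0 : 0 < Real.log x := Real.log_pos (by linarith)
  have hu := rpow_third_le hL0.le
  set u := Real.log x ^ ((1 : ℝ) / 3)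
  have hu0 : 0 ≤ u := by positivity
  set M := ⌊x⌋₊ with hM
  have hM2 : 2 ≤ M := Nat.le_floor (by exact_mod_cast hx)
  have hMx : (M : ℝ) ≤ x := Nat.floor_le hx0.le
  have hxM : x < M + 1 := Nat.lt_floor_add_one x
  set T := (Icc 2 M).filter (fun n => ¬ Nat.Coprime (maxPrimeFac n) k) with hT
  have hTcard : (T.card : ℝ) ≤ (Nat.smoothNumbersUpTo M (k + 8)).card := by
    have h1 : T ⊆ (Icc 2 M).filter (fun n => maxPrimeFac n ≤ k + 7) := by
      intro n hn
      rw [hT, mem_filter, mem_Icc] at hn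
      rw [mem_filter, mem_Icc]
      refine ⟨hn.1, ?_⟩
      have hp := Nat.prime_of_mem_primeFactors (maxPrimeFac_mem hn.1.1)
      have hd : maxPrimeFac n ∣ k := by
        by_contra h
        exact hn.2 ((Nat.Prime.coprime_iff_not_dvd hp).2 h)
      have := Nat.le_of_dvd (Nat.pos_of_ne_zero (NeZero.ne k)) hd
      omega
    exact_mod_cast (card_le_card h1).trans (card_maxPrimeFac_le _ _)
  have hsum : ∑ n ∈ Icc 2 M, (1 : DirichletCharacter ℂ k) (maxPrimeFac n) =
      ((M - 1 - T.card : ℝ) : ℂ) := by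
    have h1 : ∀ n : ℕ, (1 : DirichletCharacter ℂ k) (maxPrimeFac n) =
        1 - (if ¬ Nat.Coprime (maxPrimeFac n) k then 1 else 0) := by
      intro n
      by_cases h : Nat.Coprime (maxPrimeFac n) k
      · rw [MulChar.one_apply ((ZMod.isUnit_iff_coprime _ _).2 h)]; simp [h]
      · rw [MulChar.map_nonunit _ (fun h' => h ((ZMod.isUnit_iff_coprime _ _).1 h'))]; simp [h]
    simp_rw [h1]
    rw [sum_sub_distrib, ← sum_filter, sum_const, sum_const, Nat.card_Icc, ← hT,
      show M + 1 - 2 = M - 1 by omega, nsmul_eq_mul, nsmul_eq_mul, Nat.cast_sub (by omega)]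
    push_cast; ring
  rw [hsum, ← Complex.ofReal_sub, Complex.norm_real, Real.norm_eq_abs]
  have hT0 : (0 : ℝ) ≤ T.card := by positivity
  have h1 : |(M - 1 - T.card : ℝ) - x| ≤ 2 + T.card := by
    rw [abs_le]; constructor <;> linarith
  refine h1.trans ?_
  have hE : x * Real.exp (-a * u) = Real.exp (Real.log x - a * u) := by
    rw [sub_eq_add_neg, Real.exp_add, Real.exp_log hx0, neg_mul]
  have h2 : 2 ≤ 2 * Real.exp a * (x * Real.exp (-a * u)) := by
    have : 1 ≤ Real.exp a * (x * Real.exp (-a * u)) := by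
      rw [hE, ← Real.exp_add]
      refine Real.one_le_exp ?_
      nlinarith
    linarith
  have h3 : (T.card : ℝ) ≤ (7 * l) ^ 30 * Real.exp a * (x * Real.exp (-a * u)) := by
    refine hTcard.trans ((smoothNumbersUpTo_card_le_rankin (x := x) (by linarith) hN).trans ?_)
    rw [← hl]
    have h4 : Real.exp (-(Real.log x / l)) ≤ Real.exp a * Real.exp (-a * u) := by
      rw [← Real.exp_add]
      refine Real.exp_le_exp.2 ?_
      have : Real.log x / l = a * Real.log x := by rw [ha]; ring
      rw [this]
      nlinarith
    calc x * Real.exp (-(Real.log x / l)) * (7 * l) ^ 30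
        ≤ x * (Real.exp a * Real.exp (-a * u)) * (7 * l) ^ 30 := by gcongr
      _ = _ := by ring
  linarith

end LargestPrime

/-! ### Detecting the residue class -/

theorem largest_prime_factor_equidistribution (k : ℕ) (hk : 1 ≤ k) (ℓ : ℤ)
    (hlk : Int.gcd ℓ k = 1) :
    ∃ C > 0, ∃ c > 0, ∀ x : ℝ, 2 ≤ x →
      |(((Finset.Icc 2 ⌊x⌋₊).filter
            (fun n => (maxPrimeFac n : ℤ) ≡ ℓ [ZMOD (k : ℤ)])).card : ℝ)
          - x / (Nat.totient k : ℝ)|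
        ≤ C * x * Real.exp (-c * Real.log x ^ ((1 : ℝ) / 3)) := by
  classical
  have : NeZero k := ⟨by omega⟩
  have hall : ∀ χ : DirichletCharacter ℂ k, ∃ C > 0, ∃ c > 0, ∀ x : ℝ, 2 ≤ x →
      ‖∑ n ∈ Icc 2 ⌊x⌋₊, χ (maxPrimeFac n) - (if χ = 1 then (x : ℂ) else 0)‖ ≤
        C * x * Real.exp (-c * Real.log x ^ ((1 : ℝ) / 3)) := by
    intro χ
    by_cases hχ : χ = 1
    · subst hχ; simpa using exists_trivial_bound (k := k)
    · simpa [hχ] using exists_nontrivial_bound χ hχ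
  choose C hC c hc H using hall
  obtain ⟨χ₀, -, hmin⟩ := exists_min_image (univ : Finset (DirichletCharacter ℂ k)) c
    univ_nonempty
  refine ⟨∑ χ, C χ, sum_pos (fun χ _ => hC χ) univ_nonempty, c χ₀, hc χ₀, fun x hx => ?_⟩
  have hx0 : 0 < x := by linarith
  have hL0 : 0 ≤ Real.log x := Real.log_nonneg (by linarith)
  set u := Real.log x ^ ((1 : ℝ) / 3) with hu
  have hu0 : 0 ≤ u := by positivity
  have hunit : IsUnit ((ℓ : ℤ) : ZMod k) := by
    rw [ZMod.coe_int_isUnit_iff_isCoprime, Int.isCoprime_iff_gcd_eq_one, Int.gcd_comm]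
    exact hlk
  have hunit' : IsUnit ((ℓ : ZMod k)⁻¹) := by
    exact IsUnit.of_mul_eq_one _ (ZMod.inv_mul_of_unit _ hunit)
  have hφ : (1 : ℝ) ≤ Nat.totient k := by exact_mod_cast Nat.totient_pos.2 hk
  set N := ((Icc 2 ⌊x⌋₊).filter (fun n => (maxPrimeFac n : ℤ) ≡ ℓ [ZMOD (k : ℤ)])).card with hN
  have hcount : (Nat.totient k : ℂ) * N =
      ∑ χ : DirichletCharacter ℂ k, χ (ℓ : ZMod k)⁻¹ * ∑ n ∈ Icc 2 ⌊x⌋₊, χ (maxPrimeFac n) := by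
    simp_rw [mul_sum]
    rw [sum_comm]
    simp_rw [DirichletCharacter.sum_char_inv_mul_char_eq ℂ hunit]
    rw [← sum_filter, sum_const, nsmul_eq_mul, mul_comm, hN]
    congr 3
    refine filter_congr fun n _ => ?_
    rw [← ZMod.intCast_eq_intCast_iff, Int.cast_natCast, eq_comm]
  have hmain : (Nat.totient k : ℂ) * N - x = ∑ χ : DirichletCharacter ℂ k, χ (ℓ : ZMod k)⁻¹ *
      (∑ n ∈ Icc 2 ⌊x⌋₊, χ (maxPrimeFac n) - (if χ = 1 then (x : ℂ) else 0)) := by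
    simp_rw [mul_sub]
    rw [sum_sub_distrib, ← hcount]
    simp [MulChar.one_apply hunit']
  have hbound : |(Nat.totient k : ℝ) * N - x| ≤ (∑ χ, C χ) * x * Real.exp (-c χ₀ * u) := by
    have e : |(Nat.totient k : ℝ) * N - x| = ‖(Nat.totient k : ℂ) * N - x‖ := by
      rw [← Real.norm_eq_abs, ← Complex.norm_real]; push_cast; rfl
    rw [e, hmain, sum_mul, sum_mul]
    refine norm_sum_le_of_le _ fun χ _ => ?_
    rw [norm_mul]
    refine (mul_le_of_le_one_left (norm_nonneg _) (χ.norm_le_one _)).trans ((H χ x hx).trans ?_)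
    have h1 : c χ₀ ≤ c χ := hmin χ (mem_univ _)
    have h2 : -c χ * u ≤ -c χ₀ * u := by nlinarith
    have := hC χ
    gcongr
  have e : (N : ℝ) - x / Nat.totient k = ((Nat.totient k : ℝ) * N - x) / Nat.totient k := by
    field_simp
  rw [e, abs_div, Nat.abs_cast]
  exact (div_le_self (abs_nonneg _) hφ).trans hbound
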